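/- arXiv:2605.23773 — 2 statements merged into one kernel-verified Lean document; each statement's English description precedes it below -/
import Mathlib

section
/- Let ℓ, m, ℓ', m' be positive integers such that ℓ·m = ℓ'·m' and ℓ ≤ ℓ' ≤ m' ≤ m. Then τ(ℓ,m) ≤ τ(ℓ',m'), i.e., the number of spanning trees of the ℓ×m rectangular grid graph is at most the number of spanning trees of the ℓ'×m' rectangular grid graph. -/
/-- The rectangular grid graph `R_{ℓ,m}`: the box (Cartesian) product of the path
graphs on `ℓ` and `m` vertices. -/
def gridGraph (l m : ℕ) : SimpleGraph (Fin l × Fin m) :=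
  (SimpleGraph.pathGraph l).boxProd (SimpleGraph.pathGraph m)

/-- `gridTau l m` is the number of spanning trees of the `l × m` rectangular grid graph,
i.e. the number of spanning subgraphs of `gridGraph l m` that are trees. -/
noncomputable def gridTau (l m : ℕ) : ℕ :=
  Set.ncard {H : (gridGraph l m).Subgraph | H.IsSpanning ∧ H.coe.IsTree}

/-!
By the matrix-tree theorem and the explicit spectrum of a path, `τ(ℓ,m)` is the product of
`sinh (m θᵢ) / sinh θᵢ` over `0 < i < ℓ`, where `θᵢ = θ (iπ/ℓ)` and `cosh (θ x) = 2 - cos x`. The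
numerator is exponentially close to `exp (m θᵢ) / 2`, and `∏ sinh θᵢ` has a closed form. As `θ` is
concave on `[0, π]`, the trapezoidal and midpoint rules bound `∑ θᵢ` above and below, so that

`log τ(ℓ,m) = e ℓ m - (ℓ + m) α / 2 - (log ℓ) / 2 + const + error`, with `α = θ π`.

The area terms of the two grids agree. When `ℓ < ℓ'`, the semiperimeter drops by at least `1`,
because these are integers, and the gain `α / 2` per unit outweighs the logarithm and the error.
-/

namespace GridSpanningTree

open Finset Real MeasureTheory
open scoped Matrix Kronecker

section RootedMaps

variable {V : Type*} {f : V → V} {r : V}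

/-- The functional digraph of `f` is a tree directed towards the root `r`, up to the value `f r`,
which is left unconstrained. -/
def IsRootedAt (f : V → V) (r : V) : Prop :=
  ∀ v, ∃ k : ℕ, f^[k] v = r

theorem isRootedAt_iff_exists_rank :
    IsRootedAt f r ↔ ∃ d : V → ℕ, ∀ v ≠ r, d (f v) < d v := by
  classical
  constructor
  · intro h
    refine ⟨fun v ↦ Nat.find (h v), fun v hv ↦ ?_⟩
    obtain ⟨k, hk⟩ : ∃ k, Nat.find (h v) = k + 1 :=
      Nat.exists_eq_succ_of_ne_zero fun h0 ↦ hv (by simpa [h0] using Nat.find_spec (h v))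
    have hspec : f^[k] (f v) = r := by
      simpa [hk, Function.iterate_succ_apply] using Nat.find_spec (h v)
    exact (Nat.find_min' (h (f v)) hspec).trans_lt (hk.symm ▸ k.lt_succ_self : k < Nat.find (h v))
  · rintro ⟨d, hd⟩ v
    induction hn : d v using Nat.strong_induction_on generalizing v with
    | _ n ih =>
      by_cases hv : v = r
      · exact ⟨0, hv⟩
      · obtain ⟨k, hk⟩ := ih _ (hn ▸ hd v hv) (f v) rfl
        exact ⟨k + 1, hk⟩

theorem IsRootedAt.induction (h : IsRootedAt f r) {P : V → Prop} (root : P r)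
    (step : ∀ v ≠ r, P (f v) → P v) (v : V) : P v := by
  obtain ⟨d, hd⟩ := isRootedAt_iff_exists_rank.1 h
  induction hn : d v using Nat.strong_induction_on generalizing v with
  | _ n ih =>
    by_cases hv : v = r
    · exact hv ▸ root
    · exact step v hv (ih _ (hn ▸ hd v hv) (f v) rfl)

theorem IsRootedAt.apply_apply_ne (h : IsRootedAt f r) (hr : f r = r) {v : V} (hv : v ≠ r) :
    f (f v) ≠ v := by
  obtain ⟨d, hd⟩ := isRootedAt_iff_exists_rank.1 h
  intro hcycle
  have hfv : f v ≠ r := fun hfv ↦ hv (by rw [← hcycle, hfv, hr])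
  have h1 := hd v hv
  have h2 := hd (f v) hfv
  rw [hcycle] at h2
  omega

section ParentMatrix

variable [DecidableEq V]

/-- The matrix whose row at `v` is the Laplacian contribution `e_v - e_{f v}` of the edge from `v`
to its parent `f v`, except that the row of the root `r` is `e_r`. -/
def parentMatrix (R : Type*) [Ring R] (r : V) (f : V → V) : Matrix V V R :=
  Matrix.of fun v ↦ if v = r then Pi.single r 1 else Pi.single v 1 - Pi.single (f v) 1

variable [Fintype V] (R : Type*) [CommRing R]

theorem det_parentMatrix_of_isRootedAt (h : IsRootedAt f r) : (parentMatrix R r f).det = 1 := by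
  obtain ⟨d, hd⟩ := isRootedAt_iff_exists_rank.1 h
  have htri : (parentMatrix R r f)ᵀ.BlockTriangular d := by
    intro i j hij
    have hne : i ≠ j := by rintro rfl; exact lt_irrefl _ hij
    by_cases hj : j = r
    · subst hj; simp [parentMatrix, hne]
    · have : i ≠ f j := by rintro rfl; exact lt_asymm hij (hd j hj)
      simp [parentMatrix, hj, hne, this]
  have hblock (a : ℕ) : (parentMatrix R r f)ᵀ.toSquareBlock d a = 1 := by
    ext ⟨i, hi⟩ ⟨j, hj⟩
    by_cases hjr : j = r
    · subst hjr
      simp [parentMatrix, Matrix.toSquareBlock_def, Matrix.one_apply, Pi.single_apply]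
    · have : i ≠ f j := by rintro rfl; exact (hd j hjr).ne (hi.trans hj.symm)
      simp [parentMatrix, Matrix.toSquareBlock_def, Matrix.one_apply, Pi.single_apply, hjr, this]
  simp [← Matrix.det_transpose (parentMatrix R r f), htri.det, hblock]

/-- The indicator of the vertices that never reach the root lies in the kernel. -/
theorem det_parentMatrix_of_not_isRootedAt (h : ¬ IsRootedAt f r) :
    (parentMatrix R r f).det = 0 := by
  classical
  obtain ⟨v₀, hv₀⟩ := not_forall.1 h
  let x : V → R := fun v ↦ if ∃ k : ℕ, f^[k] v = r then 0 else 1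
  have hx₀ : x v₀ = 1 := if_neg hv₀
  have hxr : x r = 0 := if_pos ⟨0, rfl⟩
  have hx (v : V) (hv : v ≠ r) : x (f v) = x v := by
    have : (∃ k : ℕ, f^[k] (f v) = r) ↔ ∃ k : ℕ, f^[k] v = r := by
      refine ⟨fun ⟨k, hk⟩ ↦ ⟨k + 1, hk⟩, fun ⟨k, hk⟩ ↦ ?_⟩
      cases k with
      | zero => exact absurd hk hv
      | succ k => exact ⟨k, hk⟩
    simp [x, this]
  have hker : parentMatrix R r f *ᵥ x = 0 := by
    funext v
    by_cases hv : v = r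
    · simp [Matrix.mulVec, parentMatrix, hv, hxr]
    · have hrow : parentMatrix R r f v = Pi.single v 1 - Pi.single (f v) 1 := if_neg hv
      change parentMatrix R r f v ⬝ᵥ x = 0
      simp [hrow, sub_dotProduct, hx v hv]
  exact Matrix.det_eq_zero_of_mulVec_eq_zero_of_mem_nonZeroDivisors hker (hx₀ ▸ one_mem _)

end ParentMatrix

/-- The undirected graph joining every vertex `v` to `f v`. -/
def parentGraph (f : V → V) : SimpleGraph V :=
  SimpleGraph.fromRel fun v w ↦ w = f v

theorem IsRootedAt.parentGraph_connected (h : IsRootedAt f r) : (parentGraph f).Connected := by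
  have hroot (v : V) : (parentGraph f).Reachable v r := by
    induction v using h.induction with
    | root => rfl
    | step v _ ih =>
      by_cases hvf : v = f v
      · rwa [← hvf] at ih
      · exact (SimpleGraph.Adj.reachable (by simp [parentGraph, hvf])).trans ih
  have : Nonempty V := ⟨r⟩
  exact ⟨fun u v ↦ (hroot u).trans (hroot v).symm⟩

theorem parentGraph_adj_iff (hr : f r = r) {v w : V} :
    (parentGraph f).Adj v w ↔ v ≠ w ∧ ((v ≠ r ∧ w = f v) ∨ (w ≠ r ∧ v = f w)) := by
  simp only [parentGraph, SimpleGraph.fromRel_adj]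
  aesop

theorem IsRootedAt.parentGraph_isTree [Finite V] (h : IsRootedAt f r) (hr : f r = r) :
    (parentGraph f).IsTree := by
  have hconn := h.parentGraph_connected
  have hsub : (parentGraph f).edgeSet ⊆ (fun v ↦ s(v, f v)) '' {r}ᶜ := by
    refine Sym2.ind fun v w hvw ↦ ?_
    obtain ⟨-, ⟨hv, h⟩ | ⟨hw, h⟩⟩ := (parentGraph_adj_iff hr).1 hvw
    · exact ⟨v, hv, congrArg (s(v, ·)) h.symm⟩
    · exact ⟨w, hw, Sym2.eq_swap.trans (congrArg (s(·, w)) h.symm)⟩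
  have hcard : Nat.card (parentGraph f).edgeSet ≤ Nat.card V - 1 := calc
    Nat.card (parentGraph f).edgeSet ≤ ({r}ᶜ : Set V).ncard :=
      (Set.ncard_le_ncard hsub).trans (Set.ncard_image_le)
    _ = Nat.card V - 1 := by rw [Set.ncard_compl, Set.ncard_singleton]
  have : Nonempty V := ⟨r⟩
  refine SimpleGraph.isTree_iff_connected_and_card.2
    ⟨hconn, hconn.card_vert_le_card_edgeSet_add_one.antisymm' ?_⟩
  have := Nat.card_pos (α := V)
  omega

end RootedMaps

section MatrixTree

variable {V : Type*} (G : SimpleGraph V)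

/-- The spanning trees of `G`, encoded as graphs on the vertex set of `G`. -/
def spanningTrees : Set (SimpleGraph V) :=
  {T | T ≤ G ∧ T.IsTree}

theorem ncard_isSpanning_isTree_eq :
    {H : G.Subgraph | H.IsSpanning ∧ H.coe.IsTree}.ncard = (spanningTrees G).ncard := by
  refine Set.ncard_congr (fun H _ ↦ H.spanningCoe) ?_ ?_ ?_
  · rintro H ⟨hs, ht⟩
    exact ⟨H.spanningCoe_le, (H.spanningCoeEquivCoeOfSpanning hs).isTree_iff.2 ht⟩
  · rintro H K ⟨hH, -⟩ ⟨hK, -⟩ h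
    refine SimpleGraph.Subgraph.ext ?_ (SimpleGraph.Subgraph.spanningCoe_inj.1 h)
    rw [SimpleGraph.Subgraph.isSpanning_iff.1 hH, SimpleGraph.Subgraph.isSpanning_iff.1 hK]
  · rintro T ⟨hT, ht⟩
    have hs := SimpleGraph.toSubgraph.isSpanning T hT
    exact ⟨SimpleGraph.toSubgraph T hT,
      ⟨hs, (SimpleGraph.Subgraph.spanningCoeEquivCoeOfSpanning _ hs).isTree_iff.1 ht⟩, rfl⟩

/-- `f` is the parent map of a spanning tree of `G` rooted at `r`; the root is its own parent. -/
structure IsParentMap (r : V) (f : V → V) : Prop where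
  map_root : f r = r
  adj : ∀ v ≠ r, G.Adj v (f v)
  isRootedAt : IsRootedAt f r

variable {G} {r : V} {f g : V → V}

theorem IsParentMap.parentGraph_le (h : IsParentMap G r f) : parentGraph f ≤ G := by
  intro v w hvw
  obtain ⟨-, ⟨hv, rfl⟩ | ⟨hw, rfl⟩⟩ := (parentGraph_adj_iff h.map_root).1 hvw
  · exact h.adj v hv
  · exact (h.adj w hw).symm

theorem IsParentMap.eq_of_parentGraph_eq (hf : IsParentMap G r f) (hg : IsParentMap G r g)
    (hfg : parentGraph f = parentGraph g) : f = g := by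
  funext v
  induction v using hf.isRootedAt.induction with
  | root => rw [hf.map_root, hg.map_root]
  | step v hv ih =>
    have hadj : (parentGraph g).Adj v (f v) :=
      hfg ▸ (parentGraph_adj_iff hf.map_root).2 ⟨(hf.adj v hv).ne, .inl ⟨hv, rfl⟩⟩
    obtain ⟨-, ⟨-, h⟩ | ⟨-, h⟩⟩ := (parentGraph_adj_iff hg.map_root).1 hadj
    · exact h
    · exact absurd (ih.trans h.symm) (hf.isRootedAt.apply_apply_ne hf.map_root hv)

/-- Send every vertex to the next one on a shortest path to the root. -/
theorem exists_isParentMap_of_connected (hG : G.Connected) (r : V) : ∃ f, IsParentMap G r f := by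
  classical
  have hnext (v : V) : ∃ u, v ≠ r → G.Adj v u ∧ G.dist u r < G.dist v r := by
    obtain ⟨p, hp⟩ := hG.exists_walk_length_eq_dist v r
    cases p with
    | nil => exact ⟨r, fun h ↦ absurd rfl h⟩
    | @cons _ u _ hvu q =>
      refine ⟨u, fun _ ↦ ⟨hvu, (SimpleGraph.dist_le q).trans_lt ?_⟩⟩
      rw [← hp, SimpleGraph.Walk.length_cons]
      exact q.length.lt_succ_self
  choose next hadj using hnext
  refine ⟨fun v ↦ if v = r then r else next v, by simp, fun v hv ↦ ?_,
    isRootedAt_iff_exists_rank.2 ⟨(G.dist · r), fun v hv ↦ ?_⟩⟩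
  · simpa [hv] using (hadj v hv).1
  · simpa [hv] using (hadj v hv).2

theorem ncard_isParentMap [Finite V] (G : SimpleGraph V) (r : V) :
    {f | IsParentMap G r f}.ncard = (spanningTrees G).ncard := by
  refine Set.ncard_congr (fun f _ ↦ parentGraph f) ?_ ?_ ?_
  · exact fun f hf ↦ ⟨hf.parentGraph_le, hf.isRootedAt.parentGraph_isTree hf.map_root⟩
  · exact fun f g hf hg ↦ hf.eq_of_parentGraph_eq hg
  · rintro T ⟨hTG, hT⟩
    obtain ⟨f, hf⟩ := exists_isParentMap_of_connected hT.connected r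
    refine ⟨f, ⟨hf.map_root, fun v hv ↦ hTG (hf.adj v hv), hf.isRootedAt⟩, ?_⟩
    exact hf.parentGraph_le.antisymm ((SimpleGraph.isTree_iff_minimal_connected.1 hT).le_of_le
      hf.isRootedAt.parentGraph_connected hf.parentGraph_le)

variable [Fintype V] [DecidableEq V] (R : Type*) [CommRing R]
variable (G) [DecidableRel G.Adj]

theorem lapMatrix_row_eq_sum (v : V) :
    G.lapMatrix R v = ∑ u ∈ G.neighborFinset v, (Pi.single v 1 - Pi.single u 1) := by
  funext w
  rw [SimpleGraph.lapMatrix, SimpleGraph.degMatrix, Matrix.sub_apply, SimpleGraph.adjMatrix_apply]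
  by_cases hw : v = w
  · subst hw; simp [Finset.sum_apply, Pi.single_apply]
  · simp [Finset.sum_apply, Pi.single_apply, hw, Ne.symm hw]

/-- Expanding the determinant by multilinearity in the rows picks a parent for each vertex; only the
rooted choices survive. -/
theorem adjugate_lapMatrix_apply_self (r : V) :
    (G.lapMatrix R).adjugate r r = (spanningTrees G).ncard := by
  classical
  let choices (v : V) : Finset V := if v = r then {r} else G.neighborFinset v
  have hrow : (G.lapMatrix R).updateRow r (Pi.single r 1) = fun v ↦ ∑ u ∈ choices v,
      if v = r then Pi.single r 1 else Pi.single v 1 - Pi.single u 1 := by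
    funext v
    by_cases hv : v = r
    · subst hv; simp [choices]
    · simp only [choices, if_neg hv, Matrix.updateRow_ne hv, lapMatrix_row_eq_sum]
  have hexpand : (G.lapMatrix R).adjugate r r =
      ∑ f ∈ Fintype.piFinset choices, (parentMatrix R r f).det := by
    rw [Matrix.adjugate_apply, hrow]
    exact (Matrix.detRowAlternating (R := R) (n := V)).toMultilinearMap.map_sum_finset
      (fun v u ↦ if v = r then Pi.single r 1 else Pi.single v 1 - Pi.single u 1) choices
  have hdet (f : V → V) : (parentMatrix R r f).det = if IsRootedAt f r then 1 else 0 := by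
    split_ifs with h
    · exact det_parentMatrix_of_isRootedAt R h
    · exact det_parentMatrix_of_not_isRootedAt R h
  have hmem : {f | IsParentMap G r f} =
      ({f ∈ Fintype.piFinset choices | IsRootedAt f r} : Finset (V → V)) := by
    ext f
    simp only [Set.mem_ofPred_eq, coe_filter, Fintype.mem_piFinset]
    refine ⟨fun h ↦ ⟨fun v ↦ ?_, h.isRootedAt⟩, fun ⟨h, hroot⟩ ↦
      ⟨by simpa [choices] using h r, fun v hv ↦ by simpa [choices, hv] using h v, hroot⟩⟩
    by_cases hv : v = r
    · subst hv; simp [choices, h.map_root]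
    · simpa [choices, hv] using h.adj v hv
  rw [hexpand, ← ncard_isParentMap G r, hmem, Set.ncard_coe_finset, Finset.card_filter]
  simp [hdet]

theorem trace_adjugate_lapMatrix :
    (G.lapMatrix R).adjugate.trace = Fintype.card V * (spanningTrees G).ncard := by
  simp [Matrix.trace, adjugate_lapMatrix_apply_self]

end MatrixTree

section Diagonalization

theorem prod_erase_prodMk {α β M : Type*} [Fintype α] [Fintype β] [DecidableEq α] [DecidableEq β]
    [CommMonoid M] (f : α × β → M) (a : α) (b : β) :
    ∏ p ∈ univ.erase (a, b), f p = (∏ i ∈ univ.erase a, f (i, b)) *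
      (∏ j ∈ univ.erase b, f (a, j)) * ∏ i ∈ univ.erase a, ∏ j ∈ univ.erase b, f (i, j) := by
  have hsplit : (univ.erase (a, b) : Finset (α × β)) =
      (univ.erase a ×ˢ univ).disjUnion ({a} ×ˢ univ.erase b)
        (Finset.disjoint_left.2 (by grind)) := by
    ext ⟨i, j⟩
    grind
  have hrow (i : α) : ∏ j, f (i, j) = f (i, b) * ∏ j ∈ univ.erase b, f (i, j) :=
    (Finset.mul_prod_erase univ (fun j ↦ f (i, j)) (mem_univ b)).symm
  rw [hsplit, Finset.prod_disjUnion, Finset.prod_product, Finset.prod_product]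
  simp only [hrow, Finset.prod_singleton, Finset.prod_mul_distrib]
  exact mul_right_comm _ _ _

variable {V : Type*} [Fintype V] [DecidableEq V] {R : Type*} [CommRing R]

/-- The columns of the invertible matrix `W` are eigenvectors of `A`, with eigenvalues `d`. -/
structure Diagonalizes (W A : Matrix V V R) (d : V → R) : Prop where
  isUnit_det : IsUnit W.det
  mul_eq : A * W = W * Matrix.diagonal d

variable {W A : Matrix V V R} {d : V → R}

theorem Diagonalizes.trace_adjugate (h : Diagonalizes W A d) :
    A.adjugate.trace = ∑ k, ∏ j ∈ univ.erase k, d j := by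
  have hadj : W.det • A.adjugate = W * ((Matrix.diagonal d).adjugate * W.adjugate) := by
    rw [← Matrix.adjugate_mul_distrib, ← h.mul_eq, Matrix.adjugate_mul_distrib, ← Matrix.mul_assoc,
      Matrix.mul_adjugate, Matrix.smul_mul, Matrix.one_mul]
  refine h.isUnit_det.mul_left_cancel ?_
  calc W.det * A.adjugate.trace
      = (W * ((Matrix.diagonal d).adjugate * W.adjugate)).trace := by
        rw [← hadj, Matrix.trace_smul, smul_eq_mul]
    _ = W.det * (Matrix.diagonal d).adjugate.trace := by
        rw [Matrix.trace_mul_comm, Matrix.mul_assoc, Matrix.adjugate_mul, Matrix.mul_smul,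
          Matrix.mul_one, Matrix.trace_smul, smul_eq_mul]
    _ = W.det * ∑ k, ∏ j ∈ univ.erase k, d j := by
        rw [Matrix.adjugate_diagonal, Matrix.trace_diagonal]

theorem diagonalizes_of_injective {K : Type*} [Field K] {A W : Matrix V V K} {d : V → K}
    (hd : Function.Injective d) (hW : ∀ i, W.col i ≠ 0) (h : ∀ i, A *ᵥ W.col i = d i • W.col i) :
    Diagonalizes W A d where
  isUnit_det := by
    have hli : LinearIndependent K W.col :=
      Module.End.eigenvectors_linearIndependent' (Matrix.toLin' A) d hd _ fun i ↦
        Module.End.hasEigenvector_iff.2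
          ⟨Module.End.mem_eigenspace_iff.2 (by rw [Matrix.toLin'_apply, h]), hW i⟩
    rwa [Matrix.linearIndependent_cols_iff_isUnit, Matrix.isUnit_iff_isUnit_det] at hli
  mul_eq := by
    ext k i
    rw [Matrix.mul_diagonal, mul_comm]
    exact congrFun (h i) k

variable {G : SimpleGraph V} [DecidableRel G.Adj]

theorem Diagonalizes.card_mul_ncard_spanningTrees (h : Diagonalizes W (G.lapMatrix R) d) {k₀ : V}
    (hk₀ : d k₀ = 0) :
    (Fintype.card V * (spanningTrees G).ncard : R) = ∏ k ∈ univ.erase k₀, d k := by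
  rw [← trace_adjugate_lapMatrix, h.trace_adjugate, Finset.sum_eq_single k₀]
  · exact fun k _ hk ↦ Finset.prod_eq_zero (Finset.mem_erase.2 ⟨hk.symm, mem_univ k₀⟩) hk₀
  · simp

variable {V' : Type*} [Fintype V'] [DecidableEq V'] {W' : Matrix V' V' R} {d' : V' → R}
variable {G' : SimpleGraph V'} [DecidableRel G'.Adj]

theorem lapMatrix_boxProd [DecidableRel (G □ G').Adj] :
    (G □ G').lapMatrix R = G.lapMatrix R ⊗ₖ 1 + 1 ⊗ₖ G'.lapMatrix R := by
  ext ⟨a, b⟩ ⟨a', b'⟩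
  by_cases ha : a = a' <;> by_cases hb : b = b' <;>
    simp [SimpleGraph.lapMatrix, SimpleGraph.degMatrix, SimpleGraph.adjMatrix_apply,
      SimpleGraph.boxProd_adj, SimpleGraph.degree_boxProd, ha, hb]

theorem Diagonalizes.boxProd [DecidableRel (G □ G').Adj] (h : Diagonalizes W (G.lapMatrix R) d)
    (h' : Diagonalizes W' (G'.lapMatrix R) d') :
    Diagonalizes (W ⊗ₖ W') ((G □ G').lapMatrix R) fun p ↦ d p.1 + d' p.2 where
  isUnit_det := by
    rw [Matrix.det_kronecker]
    exact (h.isUnit_det.pow _).mul (h'.isUnit_det.pow _)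
  mul_eq := by
    have hdiag : Matrix.diagonal (fun p : V × V' ↦ d p.1 + d' p.2) =
        Matrix.diagonal d ⊗ₖ 1 + 1 ⊗ₖ Matrix.diagonal d' := by
      simp [← Matrix.diagonal_one, Matrix.diagonal_kronecker_diagonal]
    rw [lapMatrix_boxProd, hdiag, Matrix.add_mul, Matrix.mul_add]
    simp only [← Matrix.mul_kronecker_mul, h.mul_eq, h'.mul_eq, Matrix.one_mul, Matrix.mul_one]

theorem Diagonalizes.ncard_spanningTrees_boxProd [IsDomain R] [CharZero R]
    (h : Diagonalizes W (G.lapMatrix R) d) (h' : Diagonalizes W' (G'.lapMatrix R) d')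
    {i₀ : V} {j₀ : V'} (hi₀ : d i₀ = 0) (hj₀ : d' j₀ = 0) :
    ((spanningTrees (G □ G')).ncard : R) = (spanningTrees G).ncard * (spanningTrees G').ncard *
      ∏ i ∈ univ.erase i₀, ∏ j ∈ univ.erase j₀, (d i + d' j) := by
  classical
  have hV : (Fintype.card V : R) ≠ 0 := Nat.cast_ne_zero.2 (Fintype.card_pos_iff.2 ⟨i₀⟩).ne'
  have hV' : (Fintype.card V' : R) ≠ 0 := Nat.cast_ne_zero.2 (Fintype.card_pos_iff.2 ⟨j₀⟩).ne'
  refine mul_left_cancel₀ (mul_ne_zero hV hV') ?_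
  calc (Fintype.card V * Fintype.card V' : R) * (spanningTrees (G □ G')).ncard
      = ∏ p ∈ univ.erase (i₀, j₀), (d p.1 + d' p.2) := by
        rw [← (h.boxProd h').card_mul_ncard_spanningTrees (k₀ := (i₀, j₀)) (by simp [hi₀, hj₀])]
        simp
    _ = (∏ i ∈ univ.erase i₀, d i) * (∏ j ∈ univ.erase j₀, d' j) *
          ∏ i ∈ univ.erase i₀, ∏ j ∈ univ.erase j₀, (d i + d' j) := by
        simp [prod_erase_prodMk, hi₀, hj₀]
    _ = _ := by
        rw [← h.card_mul_ncard_spanningTrees hi₀, ← h'.card_mul_ncard_spanningTrees hj₀]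
        ring

end Diagonalization

section PathGraph

theorem lapMatrix_pathGraph_mulVec {R : Type*} [Ring R] {n : ℕ}
    [DecidableRel (SimpleGraph.pathGraph n).Adj] {g : ℤ → R} (hleft : g (-1) = g 0)
    (hright : g n = g (n - 1)) (k : Fin n) :
    ((SimpleGraph.pathGraph n).lapMatrix R *ᵥ fun u ↦ g u) k =
      (g k - g (k + 1)) + (g k - g (k - 1)) := by
  have hsucc : ∑ u : Fin n, (if (k : ℕ) + 1 = u then g k - g u else 0) = g k - g (k + 1) := by
    obtain hk | hk : (k : ℕ) + 1 < n ∨ (k : ℕ) + 1 = n := by omega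
    · rw [Finset.sum_eq_single ⟨k + 1, hk⟩ (fun u _ hu ↦ if_neg (by grind)) (by simp)]
      simp
    · have : (k : ℤ) + 1 = n := mod_cast hk
      rw [Finset.sum_eq_zero fun u _ ↦ if_neg (by omega), this, hright, ← this]
      simp
  have hpred : ∑ u : Fin n, (if (u : ℕ) + 1 = k then g k - g u else 0) = g k - g (k - 1) := by
    obtain hk | hk : 0 < (k : ℕ) ∨ (k : ℕ) = 0 := by omega
    · rw [Finset.sum_eq_single ⟨k - 1, by omega⟩ (fun u _ hu ↦ if_neg (by grind)) (by simp)]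
      simp [Nat.sub_add_cancel hk, Nat.cast_sub hk]
    · rw [Finset.sum_eq_zero fun u _ ↦ if_neg (by omega)]
      simp [hk, hleft]
  rw [← hsucc, ← hpred, ← Finset.sum_add_distrib, SimpleGraph.lapMatrix_mulVec_apply,
    ← SimpleGraph.card_neighborFinset_eq_degree, ← nsmul_eq_mul, ← Finset.sum_const,
    ← Finset.sum_sub_distrib, SimpleGraph.neighborFinset_eq_filter, Finset.sum_filter]
  refine Finset.sum_congr rfl fun u _ ↦ ?_
  simp only [SimpleGraph.pathGraph_adj]
  split_ifs <;> first | omega | simp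

/-- The Laplacian eigenvalues of the path on `n` vertices, for `i < n`. -/
noncomputable def pathEigenvalue (n i : ℕ) : ℝ :=
  2 - 2 * cos (i * π / n)

/-- The Laplacian eigenvector of the path on `n` vertices for `pathEigenvalue n i`: a cosine that
is symmetric about `-1/2` and `n - 1/2`. The extension to all integers encodes these two boundary
conditions. -/
noncomputable def pathEigenvector (n i : ℕ) (k : ℤ) : ℝ :=
  cos (i * (2 * k + 1) * π / (2 * n))

variable {n : ℕ}

@[simp]
theorem pathEigenvalue_zero : pathEigenvalue n 0 = 0 := by
  simp [pathEigenvalue]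

theorem pathEigenvector_neg_one (i : ℕ) : pathEigenvector n i (-1) = pathEigenvector n i 0 := by
  rw [pathEigenvector, pathEigenvector, ← cos_neg]
  congr 1
  push_cast
  ring

theorem pathEigenvector_natCast (hn : 0 < n) (i : ℕ) :
    pathEigenvector n i n = pathEigenvector n i (n - 1) := by
  rw [pathEigenvector, pathEigenvector, ← cos_neg, ← cos_add_nat_mul_two_pi _ i]
  congr 1
  push_cast
  field_simp
  ring

theorem pathEigenvector_second_difference (hn : 0 < n) (i : ℕ) (k : ℤ) :
    (pathEigenvector n i k - pathEigenvector n i (k + 1)) +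
      (pathEigenvector n i k - pathEigenvector n i (k - 1)) =
      pathEigenvalue n i * pathEigenvector n i k := by
  have hsucc : (i : ℝ) * (2 * (k + 1) + 1) * π / (2 * n) =
      i * (2 * k + 1) * π / (2 * n) + i * π / n := by field_simp; ring
  have hpred : (i : ℝ) * (2 * (k - 1) + 1) * π / (2 * n) =
      i * (2 * k + 1) * π / (2 * n) - i * π / n := by field_simp; ring
  simp only [pathEigenvector, pathEigenvalue, Int.cast_add, Int.cast_sub, Int.cast_one, hsucc,
    hpred, cos_add, cos_sub]
  ring

theorem pathEigenvector_zero_pos {i : ℕ} (hi : i < n) : 0 < pathEigenvector n i 0 := by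
  have hn : (0 : ℝ) < n := mod_cast i.zero_le.trans_lt hi
  have hangle : i * (2 * ((0 : ℤ) : ℝ) + 1) * π / (2 * n) = i / n * (π / 2) := by
    push_cast
    field_simp
    ring
  have hlt : (i : ℝ) / n < 1 := (div_lt_one hn).2 (mod_cast hi)
  rw [pathEigenvector, hangle]
  refine cos_pos_of_mem_Ioo ⟨?_, mul_lt_of_lt_one_left (by positivity) hlt⟩
  exact (neg_lt_zero.2 (by positivity)).trans_le (by positivity)

theorem pathEigenvalue_injective : Function.Injective fun i : Fin n ↦ pathEigenvalue n i := by
  intro i j hij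
  have hn : (0 : ℝ) < n := mod_cast i.pos
  have hmem (a : Fin n) : ((a : ℕ) : ℝ) * π / n ∈ Set.Icc 0 π := by
    have ha : ((a : ℕ) : ℝ) ≤ n := mod_cast a.2.le
    refine ⟨by positivity, (div_le_iff₀ hn).2 ?_⟩
    rw [mul_comm]
    gcongr
  simp only [pathEigenvalue] at hij
  have hangle := injOn_cos (hmem i) (hmem j) (by linarith)
  field_simp at hangle
  exact Fin.ext (mod_cast hangle)

theorem diagonalizes_lapMatrix_pathGraph [DecidableRel (SimpleGraph.pathGraph n).Adj] :
    Diagonalizes (Matrix.of fun k i : Fin n ↦ pathEigenvector n i k)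
      ((SimpleGraph.pathGraph n).lapMatrix ℝ) fun i ↦ pathEigenvalue n i := by
  refine diagonalizes_of_injective pathEigenvalue_injective (fun i h ↦ ?_) fun i ↦ ?_
  · exact (pathEigenvector_zero_pos i.2).ne' (congrFun h ⟨0, i.pos⟩)
  · funext k
    exact (lapMatrix_pathGraph_mulVec (pathEigenvector_neg_one i)
      (pathEigenvector_natCast i.pos i) k).trans (pathEigenvector_second_difference i.pos i k)

open Polynomial in
theorem prod_Ico_two_mul_sub_two_mul_cos (hn : 0 < n) (y : ℝ) :
    ∏ k ∈ Ico 1 n, (2 * y - 2 * cos (k * π / n)) = (Chebyshev.U ℝ (n - 1 : ℤ)).eval y := by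
  obtain ⟨n, rfl⟩ := Nat.exists_eq_add_of_le' hn
  have hinj := (range n).nodup_map_iff_injOn.1 (Chebyshev.roots_U_real_nodup n)
  have hsplit : (Chebyshev.U ℝ n).roots.card = (Chebyshev.U ℝ n).natDegree := by
    rw [Chebyshev.roots_U_real, Chebyshev.natDegree_U_natCast, card_val, card_image_of_injOn hinj,
      card_range]
  have hfactor : (Chebyshev.U ℝ n).eval y =
      2 ^ n * ∏ k ∈ range n, (y - cos ((k + 1) * π / (n + 1))) := by
    rw [← C_leadingCoeff_mul_prod_multiset_X_sub_C hsplit, Chebyshev.roots_U_real,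
      Chebyshev.leadingCoeff_U_natCast, eval_mul, eval_C, eval_multiset_prod, Multiset.map_map]
    change _ * ∏ x ∈ image _ _, _ = _
    rw [prod_image hinj]
    simp
  calc ∏ k ∈ Ico 1 (n + 1), (2 * y - 2 * cos (k * π / (n + 1 : ℕ)))
      = 2 ^ n * ∏ k ∈ Ico 1 (n + 1), (y - cos (k * π / (n + 1 : ℕ))) := by
        simp [← mul_sub, prod_mul_distrib]
    _ = (Chebyshev.U ℝ ((n + 1 : ℕ) - 1 : ℤ)).eval y := by
        simp [prod_Ico_eq_prod_range, hfactor, add_comm]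

theorem prod_univ_erase_zero_fin [NeZero n] {M : Type*} [CommMonoid M] (f : ℕ → M) :
    ∏ i ∈ univ.erase (0 : Fin n), f i = ∏ i ∈ Ico 1 n, f i := by
  refine Finset.prod_nbij (fun i : Fin n ↦ (i : ℕ)) (fun i hi ↦ ?_) Fin.val_injective.injOn
    (fun i hi ↦ ?_) fun _ _ ↦ rfl
  · simpa [Nat.one_le_iff_ne_zero, i.2] using hi
  · obtain ⟨hpos, hlt⟩ := Finset.mem_Ico.1 hi
    exact ⟨⟨i, hlt⟩, by simpa [Fin.ext_iff] using Nat.ne_of_gt hpos, rfl⟩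

theorem prod_pathEigenvalue (hn : 0 < n) : ∏ i ∈ Ico 1 n, pathEigenvalue n i = n := by
  have h := prod_Ico_two_mul_sub_two_mul_cos hn 1
  rw [Polynomial.Chebyshev.U_eval_one] at h
  simpa [pathEigenvalue] using h

theorem ncard_spanningTrees_pathGraph (hn : 0 < n) :
    (spanningTrees (SimpleGraph.pathGraph n)).ncard = 1 := by
  classical
  have : NeZero n := ⟨hn.ne'⟩
  have h := diagonalizes_lapMatrix_pathGraph.card_mul_ncard_spanningTrees
    (k₀ := (0 : Fin n)) (by simp)
  rw [prod_univ_erase_zero_fin (pathEigenvalue n), prod_pathEigenvalue hn, Fintype.card_fin] at h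
  exact_mod_cast mul_eq_left₀ (Nat.cast_ne_zero.2 hn.ne') |>.1 h

theorem gridTau_eq_prod_pathEigenvalue {l m : ℕ} (hl : 0 < l) (hm : 0 < m) :
    (gridTau l m : ℝ) =
      ∏ i ∈ Ico 1 l, ∏ j ∈ Ico 1 m, (pathEigenvalue l i + pathEigenvalue m j) := by
  classical
  have : NeZero l := ⟨hl.ne'⟩
  have : NeZero m := ⟨hm.ne'⟩
  rw [gridTau, ncard_isSpanning_isTree_eq, gridGraph,
    diagonalizes_lapMatrix_pathGraph.ncard_spanningTrees_boxProd diagonalizes_lapMatrix_pathGraph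
      (i₀ := (0 : Fin l)) (j₀ := (0 : Fin m)) (by simp) (by simp),
    ncard_spanningTrees_pathGraph hl, ncard_spanningTrees_pathGraph hm]
  simp only [Nat.cast_one, one_mul]
  rw [prod_univ_erase_zero_fin fun i ↦ ∏ j ∈ univ.erase (0 : Fin m),
    (pathEigenvalue l i + pathEigenvalue m j)]
  exact prod_congr rfl fun i _ ↦
    prod_univ_erase_zero_fin fun j ↦ pathEigenvalue l i + pathEigenvalue m j

end PathGraph

section ConcaveQuadrature

variable {f : ℝ → ℝ} {a b : ℝ}

theorem two_mul_integral_eq_integral_add_reflect (hf : IntervalIntegrable f volume a b) :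
    2 * ∫ x in a..b, f x = ∫ x in a..b, (f x + f (a + b - x)) := by
  have hrefl : IntervalIntegrable (fun x ↦ f (a + b - x)) volume a b := by
    simpa using (hf.comp_sub_left (a + b)).symm
  rw [intervalIntegral.integral_add hf hrefl, intervalIntegral.integral_comp_sub_left]
  simp [two_mul]

theorem add_le_add_reflect_of_concaveOn (hf : ConcaveOn ℝ (Set.Icc a b) f) {x : ℝ}
    (hx : x ∈ Set.Icc a b) : f a + f b ≤ f x + f (a + b - x) := by
  obtain ⟨s, t, hs, ht, hst, rfl⟩ := (segment_eq_Icc (hx.1.trans hx.2)).symm ▸ hx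
  have hab := hx.1.trans hx.2
  have hleft := hf.2 (Set.left_mem_Icc.2 hab) (Set.right_mem_Icc.2 hab) hs ht hst
  have hright := hf.2 (Set.right_mem_Icc.2 hab) (Set.left_mem_Icc.2 hab) hs ht hst
  have hrefl : a + b - (s • a + t • b) = s • b + t • a := by
    simp only [smul_eq_mul]
    linear_combination (-a - b) * hst
  rw [hrefl]
  calc f a + f b = (s • f a + t • f b) + (s • f b + t • f a) := by
        simp only [smul_eq_mul]
        linear_combination (-f a - f b) * hst
    _ ≤ _ := add_le_add hleft hright

theorem add_reflect_le_of_concaveOn (hf : ConcaveOn ℝ (Set.Icc a b) f) {x : ℝ}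
    (hx : x ∈ Set.Icc a b) : f x + f (a + b - x) ≤ 2 * f ((a + b) / 2) := by
  have hx' : a + b - x ∈ Set.Icc a b := ⟨by linarith [hx.2], by linarith [hx.1]⟩
  have h := hf.2 hx hx' (one_half_pos (α := ℝ)).le (one_half_pos (α := ℝ)).le (add_halves 1)
  simp only [smul_eq_mul] at h
  rw [show 1 / 2 * x + 1 / 2 * (a + b - x) = (a + b) / 2 by ring] at h
  linarith

theorem trapezoidal_integral_one_le_integral_of_concaveOn (hab : a ≤ b)
    (hf : ConcaveOn ℝ (Set.Icc a b) f) (hint : IntervalIntegrable f volume a b) :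
    trapezoidal_integral f 1 a b ≤ ∫ x in a..b, f x := by
  have hmono : ∫ _ in a..b, (f a + f b) ≤ ∫ x in a..b, (f x + f (a + b - x)) :=
    intervalIntegral.integral_mono_on hab intervalIntegrable_const
      (hint.add (by simpa using (hint.comp_sub_left (a + b)).symm))
      fun x hx ↦ add_le_add_reflect_of_concaveOn hf hx
  rw [← two_mul_integral_eq_integral_add_reflect hint, intervalIntegral.integral_const,
    smul_eq_mul] at hmono
  rw [trapezoidal_integral_one]
  linarith

theorem integral_le_mul_midpoint_of_concaveOn (hab : a ≤ b)
    (hf : ConcaveOn ℝ (Set.Icc a b) f) (hint : IntervalIntegrable f volume a b) :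
    ∫ x in a..b, f x ≤ (b - a) * f ((a + b) / 2) := by
  have hmono : ∫ x in a..b, (f x + f (a + b - x)) ≤ ∫ _ in a..b, 2 * f ((a + b) / 2) :=
    intervalIntegral.integral_mono_on hab
      (hint.add (by simpa using (hint.comp_sub_left (a + b)).symm)) intervalIntegrable_const
      fun x hx ↦ add_reflect_le_of_concaveOn hf hx
  rw [← two_mul_integral_eq_integral_add_reflect hint, intervalIntegral.integral_const,
    smul_eq_mul] at hmono
  linarith

theorem trapezoidal_integral_le_integral_of_concaveOn (hab : a ≤ b)
    (hf : ConcaveOn ℝ (Set.Icc a b) f) (hint : IntervalIntegrable f volume a b) {n : ℕ}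
    (hn : 0 < n) : trapezoidal_integral f n a b ≤ ∫ x in a..b, f x := by
  let h := (b - a) / n
  have hn' : (n : ℝ) ≠ 0 := by positivity
  have hb : b = a + n * h := by simp only [h]; field_simp; ring
  have hh : 0 ≤ h := div_nonneg (sub_nonneg.2 hab) n.cast_nonneg
  let node (k : ℕ) : ℝ := a + k * h
  have hnode : Monotone node := fun i j hij ↦ by simp only [node]; gcongr
  have hnode_zero : node 0 = a := by simp [node]
  have hsub (k : ℕ) (hk : k < n) : Set.Icc (node k) (node (k + 1)) ⊆ Set.Icc a b :=
    Set.Icc_subset_Icc (hnode_zero ▸ hnode k.zero_le) (hb ▸ hnode hk)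
  have hint' (k : ℕ) (hk : k < n) : IntervalIntegrable f volume (node k) (node (k + 1)) := by
    refine hint.mono_set ?_
    rw [Set.uIcc_of_le (hnode k.le_succ), Set.uIcc_of_le hab]
    exact hsub k hk
  calc trapezoidal_integral f n a b
      = ∑ k ∈ range n, trapezoidal_integral f 1 (node k) (node (k + 1)) := by
        rw [hb, ← sum_trapezoidal_integral_adjacent_intervals hn]
        simp only [node, Nat.cast_add, Nat.cast_one]
    _ ≤ ∑ k ∈ range n, ∫ x in node k..node (k + 1), f x := sum_le_sum fun k hk ↦
        have hk' := Finset.mem_range.1 hk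
        trapezoidal_integral_one_le_integral_of_concaveOn (hnode k.le_succ)
          (hf.subset (hsub k hk') (convex_Icc _ _)) (hint' k hk')
    _ = ∫ x in a..b, f x := by
        rw [intervalIntegral.sum_integral_adjacent_intervals hint', hnode_zero, hb]

theorem integral_le_mul_sum_midpoint_of_concaveOn {h : ℝ} (hh : 0 ≤ h) {m n : ℕ} (hmn : m ≤ n)
    (hf : ConcaveOn ℝ (Set.Icc ((m - 1 / 2) * h) ((n - 1 / 2) * h)) f)
    (hint : IntervalIntegrable f volume ((m - 1 / 2) * h) ((n - 1 / 2) * h)) :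
    ∫ x in (m - 1 / 2) * h..(n - 1 / 2) * h, f x ≤ h * ∑ k ∈ Ico m n, f (k * h) := by
  let node (k : ℕ) : ℝ := (k - 1 / 2) * h
  have hnode : Monotone node := fun i j hij ↦ by simp only [node]; gcongr
  have hsub (k : ℕ) (hk : k ∈ Set.Ico m n) :
      Set.Icc (node k) (node (k + 1)) ⊆ Set.Icc (node m) (node n) :=
    Set.Icc_subset_Icc (hnode hk.1) (hnode hk.2)
  have hint' (k : ℕ) (hk : k ∈ Set.Ico m n) :
      IntervalIntegrable f volume (node k) (node (k + 1)) := by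
    refine hint.mono_set ?_
    rw [Set.uIcc_of_le (hnode k.le_succ), Set.uIcc_of_le (hnode hmn)]
    exact hsub k hk
  calc ∫ x in node m..node n, f x
      = ∑ k ∈ Ico m n, ∫ x in node k..node (k + 1), f x :=
        (intervalIntegral.sum_integral_adjacent_intervals_Ico hmn hint').symm
    _ ≤ ∑ k ∈ Ico m n, h * f (k * h) := sum_le_sum fun k hk ↦ by
        have hk' := Finset.mem_Ico.1 hk
        have hlen : node (k + 1) - node k = h := by simp only [node]; push_cast; ring
        have hmid : (node k + node (k + 1)) / 2 = k * h := by simp only [node]; push_cast; ring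
        rw [← hmid, ← hlen]
        exact integral_le_mul_midpoint_of_concaveOn (hnode k.le_succ)
          (hf.subset (hsub k hk') (convex_Icc _ _)) (hint' k hk')
    _ = h * ∑ k ∈ Ico m n, f (k * h) := (mul_sum _ _ _).symm

end ConcaveQuadrature

section Dispersion

theorem prod_two_mul_cosh_sub_two_mul_cos {n : ℕ} (hn : 0 < n) {θ : ℝ} (hθ : θ ≠ 0) :
    ∏ k ∈ Ico 1 n, (2 * cosh θ - 2 * cos (k * π / n)) = sinh (n * θ) / sinh θ := by
  rw [prod_Ico_two_mul_sub_two_mul_cos hn, eq_div_iff (sinh_ne_zero.2 hθ),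
    Polynomial.Chebyshev.U_real_cosh]
  simp

/-- The dispersion function: `dispersion x` is the `θ ≥ 0` with `cosh θ = 2 - cos x` when
`0 ≤ x ≤ 2π`. Solutions of the discrete Laplace equation on `ℤ²` that oscillate with frequency `x`
in one direction grow or decay like `exp (± dispersion x)` per step in the other. -/
noncomputable def dispersion (x : ℝ) : ℝ :=
  2 * arsinh (sin (x / 2))

theorem dispersion_zero : dispersion 0 = 0 := by
  simp [dispersion]

theorem cosh_dispersion (x : ℝ) : cosh (dispersion x) = 2 - cos x := by
  have hcos : cos x = 1 - 2 * sin (x / 2) ^ 2 := by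
    rw [← cos_two_mul_eq_one_sub, mul_div_cancel₀ x two_ne_zero]
  rw [dispersion, cosh_two_mul, cosh_sq, sinh_arsinh, hcos]
  ring

theorem continuous_dispersion : Continuous dispersion :=
  continuous_const.mul (continuous_arsinh.comp (by fun_prop))

theorem hasDerivAt_dispersion (x : ℝ) :
    HasDerivAt dispersion (cos (x / 2) / √(1 + sin (x / 2) ^ 2)) x := by
  refine ((((hasDerivAt_id x).div_const 2).sin.arsinh).const_mul 2).congr_deriv ?_
  simp only [id, smul_eq_mul]
  ring

theorem concaveOn_dispersion : ConcaveOn ℝ (Set.Icc 0 π) dispersion := by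
  refine AntitoneOn.concaveOn_of_deriv (convex_Icc _ _) continuous_dispersion.continuousOn
    (fun x _ ↦ (hasDerivAt_dispersion x).differentiableAt.differentiableWithinAt)
    fun x hx y hy hxy ↦ ?_
  rw [interior_Icc] at hx hy
  rw [(hasDerivAt_dispersion x).deriv, (hasDerivAt_dispersion y).deriv]
  have hsin : sin (x / 2) ≤ sin (y / 2) := sin_le_sin_of_le_of_le_pi_div_two
    (by linarith [hx.1, pi_pos]) (by linarith [hy.2]) (by linarith)
  have hsin_nonneg : 0 ≤ sin (x / 2) :=
    sin_nonneg_of_nonneg_of_le_pi (by linarith [hx.1]) (by linarith [hx.2, pi_pos])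
  have hcos : cos (y / 2) ≤ cos (x / 2) := cos_le_cos_of_nonneg_of_le_pi
    (by linarith [hx.1]) (by linarith [hy.2, pi_pos]) (by linarith)
  have hcos_nonneg : 0 ≤ cos (x / 2) :=
    cos_nonneg_of_mem_Icc ⟨by linarith [hx.1, pi_pos], by linarith [hx.2]⟩
  gcongr

theorem dispersion_le_self {x : ℝ} (hx : 0 ≤ x) : dispersion x ≤ x := by
  have hx2 : 0 ≤ x / 2 := by positivity
  have harsinh : arsinh (sin (x / 2)) ≤ x / 2 := by
    rw [← sinh_le_sinh, sinh_arsinh]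
    exact (sin_le hx2).trans (self_le_sinh_iff.2 hx2)
  rw [dispersion]
  linarith

theorem dispersion_le_dispersion_pi (x : ℝ) : dispersion x ≤ dispersion π := by
  have := arsinh_le_arsinh.2 (sin_le_one (x / 2))
  rw [dispersion, dispersion, sin_pi_div_two]
  linarith

theorem mul_dispersion_pi_le {x : ℝ} (hx : 0 ≤ x) (hx1 : x ≤ 1) :
    x * dispersion π ≤ dispersion (x * π) := by
  have h := concaveOn_dispersion.2 (Set.left_mem_Icc.2 pi_pos.le) (Set.right_mem_Icc.2 pi_pos.le)
    (sub_nonneg.2 hx1) hx (sub_add_cancel 1 x)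
  simpa [dispersion_zero] using h

theorem cosh_dispersion_pi : cosh (dispersion π) = 3 := by
  rw [cosh_dispersion, cos_pi]
  norm_num

theorem dispersion_pi_pos : 0 < dispersion π := by
  rw [dispersion, sin_pi_div_two]
  have := arsinh_pos_iff.2 one_pos
  positivity

theorem seven_div_four_le_dispersion_pi : 7 / 4 ≤ dispersion π := by
  have hexp : exp (7 / 4) ≤ 29 / 5 := by
    refine le_of_pow_le_pow_left₀ four_ne_zero (by norm_num) ?_
    calc exp (7 / 4) ^ 4 = exp 1 ^ 7 := by
          rw [← exp_nat_mul, ← exp_nat_mul]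
          norm_num
      _ ≤ 2.7182818286 ^ 7 := by gcongr; exact exp_one_lt_d9.le
      _ ≤ (29 / 5) ^ 4 := by norm_num
  have hinv : exp (-(7 / 4)) ≤ 1 / 5 := by
    have hone : (5 : ℝ) ≤ exp (7 / 4) := by
      refine le_of_pow_le_pow_left₀ four_ne_zero (exp_nonneg _) ?_
      calc (5 : ℝ) ^ 4 ≤ 2.7182818283 ^ 7 := by norm_num
        _ ≤ exp 1 ^ 7 := by gcongr; exact exp_one_gt_d9.le
        _ = exp (7 / 4) ^ 4 := by
          rw [← exp_nat_mul, ← exp_nat_mul]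
          norm_num
    rw [exp_neg, ← one_div]
    gcongr
  have hcosh : cosh (7 / 4) ≤ cosh (dispersion π) := by
    rw [cosh_dispersion_pi, cosh_eq]
    linarith
  rwa [cosh_le_cosh, abs_of_pos dispersion_pi_pos, abs_of_pos (by norm_num)] at hcosh

theorem exp_neg_two_mul_dispersion_pi_le : exp (-(2 * dispersion π)) ≤ 1 / 33 := by
  have hcosh : cosh (2 * dispersion π) = 17 := by
    rw [cosh_two_mul, sinh_sq, cosh_dispersion_pi]
    norm_num
  have hexp : 33 ≤ exp (2 * dispersion π) := by
    have := exp_le_one_iff.2 (neg_nonpos.2 (mul_pos two_pos dispersion_pi_pos).le)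
    rw [cosh_eq] at hcosh
    linarith
  rw [exp_neg, ← one_div]
  gcongr

end Dispersion

section TransverseRates

variable {l : ℕ}

/-- The rate of exponential growth, along a grid of width `l`, of the harmonic functions whose
transverse profile is the eigenvector of the path on `l` vertices for `pathEigenvalue l i`. -/
noncomputable def rate (l i : ℕ) : ℝ :=
  dispersion (i * π / l)

theorem pathEigenvalue_eq (l i : ℕ) : pathEigenvalue l i = 2 * cosh (rate l i) - 2 := by
  rw [pathEigenvalue, rate, cosh_dispersion]
  ring

theorem mul_dispersion_pi_le_mul_rate {i : ℕ} (hi : i ≤ l) :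
    i * dispersion π ≤ l * rate l i := by
  rcases l.eq_zero_or_pos with rfl | hl
  · simp [Nat.le_zero.1 hi]
  have hl' : (0 : ℝ) < l := by exact_mod_cast hl
  have hi' : (i / l : ℝ) ≤ 1 := div_le_one_of_le₀ (by exact_mod_cast hi) hl'.le
  calc i * dispersion π = l * (i / l * dispersion π) := by field_simp
    _ ≤ l * dispersion (i / l * π) := by gcongr; exact mul_dispersion_pi_le (by positivity) hi'
    _ = l * rate l i := by rw [rate, div_mul_eq_mul_div]

theorem rate_pos {i : ℕ} (hi : i ∈ Ico 1 l) : 0 < rate l i := by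
  obtain ⟨hi1, hil⟩ := Finset.mem_Ico.1 hi
  have hi' : (0 : ℝ) < i := by exact_mod_cast hi1
  exact pos_of_mul_pos_right ((mul_pos hi' dispersion_pi_pos).trans_le
    (mul_dispersion_pi_le_mul_rate hil.le)) l.cast_nonneg

/-- The total exponential rate of a grid of width `l`: the number of spanning trees of the `l × m`
grid grows like `exp (m * rateSum l)` as `m → ∞`. -/
noncomputable def rateSum (l : ℕ) : ℝ :=
  ∑ i ∈ Ico 1 l, rate l i

/-- The limit of `(log τ(ℓ,m)) / (ℓ m)` as both sides of the grid grow. -/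
noncomputable def bulkEntropy : ℝ :=
  (∫ x in 0..π, dispersion x) / π

theorem rateSum_le (hl : 0 < l) : rateSum l ≤ l * bulkEntropy - dispersion π / 2 := by
  have hl' : (0 : ℝ) < l := by exact_mod_cast hl
  have h := trapezoidal_integral_le_integral_of_concaveOn pi_pos.le concaveOn_dispersion
    (continuous_dispersion.intervalIntegrable _ _) hl
  have hsum : trapezoidal_integral dispersion l 0 π = π / l * (rateSum l + dispersion π / 2) := by
    have hnodes (k : ℕ) : dispersion (0 + (k + 1) * (π - 0) / l) = rate l (1 + k) := by
      rw [rate]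
      push_cast
      ring_nf
    simp only [trapezoidal_integral, rateSum, sum_Ico_eq_sum_range, hnodes, dispersion_zero]
    ring
  rw [hsum] at h
  have : rateSum l + dispersion π / 2 ≤ l * bulkEntropy := by
    rw [bulkEntropy]
    field_simp at h ⊢
    linarith
  linarith

theorem integral_dispersion_le {h : ℝ} (hh : 0 ≤ h) : ∫ x in 0..h, dispersion x ≤ h ^ 2 / 2 := by
  calc ∫ x in 0..h, dispersion x ≤ ∫ x in 0..h, x :=
        intervalIntegral.integral_mono_on hh (continuous_dispersion.intervalIntegrable _ _)
          intervalIntegral.intervalIntegrable_id fun x hx ↦ dispersion_le_self hx.1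
    _ = h ^ 2 / 2 := by simp

theorem integral_dispersion_le_mul_dispersion_pi {a b : ℝ} (hab : a ≤ b) :
    ∫ x in a..b, dispersion x ≤ (b - a) * dispersion π := by
  calc ∫ x in a..b, dispersion x ≤ ∫ _ in a..b, dispersion π :=
        intervalIntegral.integral_mono_on hab (continuous_dispersion.intervalIntegrable _ _)
          intervalIntegrable_const fun x _ ↦ dispersion_le_dispersion_pi x
    _ = (b - a) * dispersion π := by simp

theorem le_rateSum (hl : 0 < l) :
    l * bulkEntropy - dispersion π / 2 - π / (8 * l) ≤ rateSum l := by
  have hl' : (1 : ℝ) ≤ l := by exact_mod_cast hl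
  set h := π / l with hh
  have hh0 : 0 < h := by positivity
  have hlh : l * h = π := by rw [hh]; field_simp
  have hint (a b : ℝ) : IntervalIntegrable dispersion volume a b :=
    continuous_dispersion.intervalIntegrable a b
  have hmiddle := integral_le_mul_sum_midpoint_of_concaveOn hh0.le hl (concaveOn_dispersion.subset
    (Set.Icc_subset_Icc (by push_cast; nlinarith) (by nlinarith)) (convex_Icc _ _)) (hint _ _)
  have hleft := integral_dispersion_le (half_pos hh0).le
  have hright : ∫ x in (l - 1 / 2) * h..π, dispersion x ≤ _ :=
    integral_dispersion_le_mul_dispersion_pi (by linarith)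
  have hsplit : ∫ x in 0..π, dispersion x = (∫ x in 0..h / 2, dispersion x) +
      (∫ x in ((1 : ℕ) - 1 / 2) * h..(l - 1 / 2) * h, dispersion x) +
      ∫ x in (l - 1 / 2) * h..π, dispersion x := by
    have hstart : ((1 : ℕ) - 1 / 2) * h = h / 2 := by push_cast; ring
    rw [hstart, intervalIntegral.integral_add_adjacent_intervals (hint _ _) (hint _ _),
      intervalIntegral.integral_add_adjacent_intervals (hint _ _) (hint _ _)]
  have hsum : ∑ k ∈ Ico 1 l, dispersion (k * h) = rateSum l :=
    sum_congr rfl fun k _ ↦ by rw [rate, hh, mul_div_assoc]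
  rw [hsum] at hmiddle
  have hbulk : h * (l * bulkEntropy) = ∫ x in 0..π, dispersion x := by
    rw [bulkEntropy, ← hlh]
    field_simp
  have herr : π / (8 * l) = h / 8 := by rw [hh]; field_simp
  rw [herr]
  refine le_of_mul_le_mul_left ?_ hh0
  linear_combination hbulk + hsplit + hleft + hmiddle + hright - dispersion π * hlh

end TransverseRates

section LogEstimates

theorem one_sub_sum_le_prod_one_sub {ι R : Type*} [LinearOrder ι] [CommRing R] [LinearOrder R]
    [IsStrictOrderedRing R] {s : Finset ι} {f : ι → R} (h0 : ∀ i ∈ s, 0 ≤ f i)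
    (h1 : ∀ i ∈ s, f i ≤ 1) : 1 - ∑ i ∈ s, f i ≤ ∏ i ∈ s, (1 - f i) := by
  rw [prod_one_sub_ordered]
  refine sub_le_sub_left (sum_le_sum fun i hi ↦ mul_le_of_le_one_right (h0 i hi) ?_) 1
  have hmem (j : ι) (hj : j ∈ s.filter (· < i)) : j ∈ s := (Finset.mem_filter.1 hj).1
  exact prod_le_one (fun j hj ↦ sub_nonneg.2 (h1 j (hmem j hj)))
    fun j hj ↦ sub_le_self 1 (h0 j (hmem j hj))

theorem two_mul_sinh (x : ℝ) : 2 * sinh x = exp x * (1 - exp (-(2 * x))) := by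
  rw [sinh_eq, mul_sub, mul_one, ← exp_add, show x + -(2 * x) = -x by ring]
  ring

theorem log_two_mul_sinh_le {x : ℝ} (hx : 0 < x) : log (2 * sinh x) ≤ x := by
  have hsinh : 0 < sinh x := sinh_pos_iff.2 hx
  rw [log_le_iff_le_exp (by positivity), two_mul_sinh]
  exact mul_le_of_le_one_right (exp_nonneg x) (sub_le_self 1 (exp_nonneg _))

theorem le_log_two_mul_sinh {x : ℝ} (hx : dispersion π ≤ x) : x - 1 / 32 ≤ log (2 * sinh x) := by
  have hexp : 32 / 33 ≤ 1 - exp (-(2 * x)) := by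
    have : exp (-(2 * x)) ≤ exp (-(2 * dispersion π)) := by gcongr
    linarith [exp_neg_two_mul_dispersion_pi_le]
  have hpos : 0 < 1 - exp (-(2 * x)) := by linarith
  have hinv : (1 - exp (-(2 * x)))⁻¹ ≤ 33 / 32 := inv_le_of_inv_le₀ (by norm_num) (by linarith)
  rw [two_mul_sinh, log_mul (exp_pos x).ne' hpos.ne', log_exp]
  linarith [one_sub_inv_le_log_of_pos hpos]

variable {l m : ℕ}

theorem gridTau_eq_prod_sinh (hl : 0 < l) (hm : 0 < m) :
    (gridTau l m : ℝ) = ∏ i ∈ Ico 1 l, sinh (m * rate l i) / sinh (rate l i) := by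
  rw [gridTau_eq_prod_pathEigenvalue hl hm]
  refine prod_congr rfl fun i hi ↦ ?_
  rw [← prod_two_mul_cosh_sub_two_mul_cos hm (rate_pos hi).ne']
  refine prod_congr rfl fun j _ ↦ ?_
  rw [pathEigenvalue_eq, pathEigenvalue]
  ring

theorem gridTau_pos (hl : 0 < l) (hm : 0 < m) : 0 < gridTau l m := by
  rw [← Nat.cast_pos (α := ℝ), gridTau_eq_prod_sinh hl hm]
  refine prod_pos fun i hi ↦ div_pos (sinh_pos_iff.2 ?_) (sinh_pos_iff.2 (rate_pos hi))
  exact mul_pos (Nat.cast_pos.2 hm) (rate_pos hi)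

/-- The denominator in `gridTau_eq_prod_sinh`, normalised to have a closed form. -/
noncomputable def sinhProd (l : ℕ) : ℝ :=
  ∏ i ∈ Ico 1 l, 2 * sinh (rate l i)

/-- The finite-size correction to the numerator in `gridTau_eq_prod_sinh`: the factor by which
`∏ 2 sinh (m * rate l i)` differs from `∏ exp (m * rate l i)`. -/
noncomputable def finiteSizeFactor (l m : ℕ) : ℝ :=
  ∏ i ∈ Ico 1 l, (1 - exp (-(2 * (m * rate l i))))

theorem sinhProd_pos (l : ℕ) : 0 < sinhProd l :=
  prod_pos fun _ hi ↦ mul_pos two_pos (sinh_pos_iff.2 (rate_pos hi))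

theorem gridTau_eq_exp_mul (hl : 0 < l) (hm : 0 < m) :
    (gridTau l m : ℝ) = exp (m * rateSum l) / sinhProd l * finiteSizeFactor l m := by
  rw [gridTau_eq_prod_sinh hl hm, rateSum, mul_sum, exp_sum, sinhProd, finiteSizeFactor,
    ← prod_div_distrib, ← prod_mul_distrib]
  refine prod_congr rfl fun i _ ↦ ?_
  rw [div_mul_eq_mul_div, ← two_mul_sinh, mul_div_mul_left _ _ two_ne_zero]

theorem exp_neg_mul_rate_le {i : ℕ} (hi : i ∈ Ico 1 l) (hlm : l ≤ m) :
    exp (-(2 * (m * rate l i))) ≤ exp (-(2 * dispersion π)) ^ i := by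
  have hlm' : (l : ℝ) ≤ m := by exact_mod_cast hlm
  have hrate := (rate_pos hi).le
  have h : i * dispersion π ≤ m * rate l i :=
    (mul_dispersion_pi_le_mul_rate (Finset.mem_Ico.1 hi).2.le).trans (by gcongr)
  rw [← exp_nat_mul, exp_le_exp]
  linarith

theorem finiteSizeFactor_le_one (l m : ℕ) : finiteSizeFactor l m ≤ 1 := by
  refine prod_le_one (fun i hi ↦ ?_) fun i _ ↦ sub_le_self 1 (exp_nonneg _)
  have := rate_pos hi
  rw [sub_nonneg, exp_le_one_iff, neg_nonpos]
  positivity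

theorem le_finiteSizeFactor (hlm : l ≤ m) : 31 / 32 ≤ finiteSizeFactor l m := by
  set q := exp (-(2 * dispersion π))
  have hq0 : 0 ≤ q := exp_nonneg _
  have hq1 : q ≤ 1 / 33 := exp_neg_two_mul_dispersion_pi_le
  have hfactor (i : ℕ) (hi : i ∈ Ico 1 l) : exp (-(2 * (m * rate l i))) ≤ q ^ i :=
    exp_neg_mul_rate_le hi hlm
  have hgeom : q ^ 1 / (1 - q) ≤ 1 / 32 := by
    rw [div_le_iff₀ (by linarith)]
    linarith
  calc (31 / 32 : ℝ) ≤ 1 - ∑ i ∈ Ico 1 l, q ^ i := by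
        linarith [geom_sum_Ico_le_of_lt_one (m := 1) (n := l) hq0 (by linarith)]
    _ ≤ 1 - ∑ i ∈ Ico 1 l, exp (-(2 * (m * rate l i))) :=
        sub_le_sub_left (sum_le_sum hfactor) 1
    _ ≤ finiteSizeFactor l m :=
        one_sub_sum_le_prod_one_sub (fun _ _ ↦ exp_nonneg _)
          fun i hi ↦ (hfactor i hi).trans (pow_le_one₀ hq0 (by linarith))

theorem sinhProd_sq (hl : 0 < l) :
    sinhProd l ^ 2 = l * (sinh (l * dispersion π) / sinh (dispersion π)) := by
  have hsq (i : ℕ) : (2 * sinh (rate l i)) ^ 2 =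
      pathEigenvalue l i * (2 * cosh (dispersion π) - 2 * cos (i * π / l)) := by
    have hcos : 2 * cos (i * π / l) = 2 - pathEigenvalue l i := by rw [pathEigenvalue]; ring
    rw [hcos, pathEigenvalue_eq, cosh_dispersion_pi, mul_pow, sinh_sq]
    ring
  rw [sinhProd, ← prod_pow, prod_congr rfl fun i _ ↦ hsq i, prod_mul_distrib,
    prod_pathEigenvalue hl, prod_two_mul_cosh_sub_two_mul_cos hl dispersion_pi_pos.ne']

theorem two_mul_log_sinhProd (hl : 0 < l) : 2 * log (sinhProd l) =
    log l + log (2 * sinh (l * dispersion π)) - log (2 * sinh (dispersion π)) := by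
  have hl' : (0 : ℝ) < l := by exact_mod_cast hl
  have hnum : 0 < sinh (l * dispersion π) := sinh_pos_iff.2 (mul_pos hl' dispersion_pi_pos)
  have hden : 0 < sinh (dispersion π) := sinh_pos_iff.2 dispersion_pi_pos
  calc 2 * log (sinhProd l) = log (sinhProd l ^ 2) := by rw [log_pow, Nat.cast_two]
    _ = log (l * (2 * sinh (l * dispersion π) / (2 * sinh (dispersion π)))) := by
      rw [sinhProd_sq hl, mul_div_mul_left _ _ two_ne_zero]
    _ = _ := by
      rw [log_mul hl'.ne' (by positivity), log_div (by positivity) (by positivity), add_sub_assoc]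

/-- The terms of order area, perimeter and `log ℓ`, and a constant, in the asymptotic expansion of
`log τ(ℓ,m)` for large `ℓ ≤ m`. -/
noncomputable def logExpansion (l m : ℕ) : ℝ :=
  l * m * bulkEntropy - (l + m) * dispersion π / 2 - log l / 2 + log (2 * sinh (dispersion π)) / 2

theorem log_gridTau_le (hl : 0 < l) (hm : 0 < m) :
    log (gridTau l m) ≤ logExpansion l m + 1 / 64 := by
  have hl' : (1 : ℝ) ≤ l := by exact_mod_cast hl
  have hexp : (gridTau l m : ℝ) ≤ exp (m * rateSum l) / sinhProd l := by
    rw [gridTau_eq_exp_mul hl hm]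
    exact mul_le_of_le_one_right (div_pos (exp_pos _) (sinhProd_pos l)).le
      (finiteSizeFactor_le_one l m)
  have hlog : log (gridTau l m) ≤ m * rateSum l - log (sinhProd l) := by
    have := log_le_log (Nat.cast_pos.2 (gridTau_pos hl hm)) hexp
    rwa [log_div (exp_pos _).ne' (sinhProd_pos l).ne', log_exp] at this
  have hrate : m * rateSum l ≤ m * (l * bulkEntropy - dispersion π / 2) := by
    gcongr
    exact rateSum_le hl
  have hsinh := le_log_two_mul_sinh (le_mul_of_one_le_left dispersion_pi_pos.le hl')
  rw [logExpansion]
  linarith [two_mul_log_sinhProd hl]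

theorem le_log_gridTau (hl : 0 < l) (hlm : l ≤ m) :
    logExpansion l m - π * m / (8 * l) - 1 / 31 ≤ log (gridTau l m) := by
  have hl' : (0 : ℝ) < l := by exact_mod_cast hl
  have hfactor := le_finiteSizeFactor hlm
  have hfactor_pos : 0 < finiteSizeFactor l m := by linarith
  have hlog_factor : -(1 / 31) ≤ log (finiteSizeFactor l m) := by
    have := inv_anti₀ (by norm_num) hfactor
    linarith [one_sub_inv_le_log_of_pos hfactor_pos]
  have hlog : log (gridTau l m) =
      m * rateSum l - log (sinhProd l) + log (finiteSizeFactor l m) := by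
    have hsinh := sinhProd_pos l
    rw [gridTau_eq_exp_mul hl (hl.trans_le hlm), log_mul (by positivity) hfactor_pos.ne',
      log_div (exp_pos _).ne' hsinh.ne', log_exp]
  have hrate : m * (l * bulkEntropy - dispersion π / 2 - π / (8 * l)) ≤ m * rateSum l := by
    gcongr
    exact le_rateSum hl
  have hsinh := log_two_mul_sinh_le (mul_pos hl' dispersion_pi_pos)
  rw [logExpansion, hlog]
  linarith [two_mul_log_sinhProd hl, mul_div_right_comm π (m : ℝ) (8 * l)]

end LogEstimates

section Comparison

theorem add_lt_add_of_mul_eq_mul {R : Type*} [CommRing R] [LinearOrder R] [IsStrictOrderedRing R]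
    {l m l' m' : R} (hl : 0 < l) (hll' : l < l') (hl'm' : l' ≤ m') (harea : l * m = l' * m') :
    l' + m' < l + m := by
  have hgap : l * (l + m - (l' + m')) = (l' - l) * (m' - l) := by linear_combination harea
  have hpos : 0 < (l' - l) * (m' - l) := mul_pos (sub_pos.2 hll') (sub_pos.2 (hll'.trans_le hl'm'))
  exact sub_pos.1 (pos_of_mul_pos_right (hgap ▸ hpos) hl.le)

theorem log_le_mul_add_inv_sub_two {a y : ℝ} (ha : 0 < a) (hy : 0 < y) :
    log y ≤ a * y + a⁻¹ - 2 := by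
  have hmul := log_le_sub_one_of_pos (mul_pos ha hy)
  have hinv := log_le_sub_one_of_pos (inv_pos.2 ha)
  rw [log_mul ha.ne' hy.ne'] at hmul
  rw [log_inv] at hinv
  linarith

theorem div_add_div_le_of_mul_eq_mul {K : Type*} [Field K] [LinearOrder K] [IsStrictOrderedRing K]
    {l m l' m' : K} (hl : 0 < l) (hll' : l + 1 ≤ l')
    (hl'm' : l' ≤ m') (harea : l * m = l' * m') :
    l' / l + m' / l' ≤ 2 + (l + m - (l' + m')) := by
  have hl' : 0 < l' := by linarith
  set g := l + m - (l' + m') with hg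
  have hm' : m' ≤ (1 + g) * l := by
    have hgap : g * l = (l' - l) * (m' - l) := by rw [hg]; linear_combination harea
    nlinarith
  rw [div_add_div _ _ hl.ne' hl'.ne', div_le_iff₀ (by positivity)]
  nlinarith

theorem expansion_error_le {l m l' m' : ℝ} (hl : 0 < l) (hll' : l + 1 ≤ l') (hl'm' : l' ≤ m')
    (harea : l * m = l' * m') (hgap : l' + m' + 1 ≤ l + m) :
    (log l' - log l) / 2 + π * m' / (8 * l') + 1 / 64 + 1 / 31 ≤
      (l + m - (l' + m')) * dispersion π / 2 := by
  have hl' : 0 < l' := by linarith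
  have hlog : log l' - log l ≤ 4 / 5 * (l' / l) - 3 / 4 := by
    have := log_le_mul_add_inv_sub_two (show (0 : ℝ) < 4 / 5 by norm_num) (div_pos hl' hl)
    rw [log_div hl'.ne' hl.ne'] at this
    norm_num at this
    linarith
  have hpi : π * m' / (8 * l') ≤ 2 / 5 * (m' / l') := by
    have hm' : 0 < m' := hl'.trans_le hl'm'
    have hcoeff : π / 8 ≤ 2 / 5 := by linarith [pi_lt_d2]
    rw [mul_div_mul_comm]
    exact mul_le_mul_of_nonneg_right hcoeff (by positivity)
  have hdispersion : 7 / 8 * (l + m - (l' + m')) ≤ (l + m - (l' + m')) * dispersion π / 2 := by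
    nlinarith [seven_div_four_le_dispersion_pi]
  linarith [div_add_div_le_of_mul_eq_mul hl hll' hl'm' harea]

theorem logExpansion_add_le {l m l' m' : ℕ} (hl : 0 < l) (hll' : l < l') (hl'm' : l' ≤ m')
    (harea : l * m = l' * m') : logExpansion l m + 1 / 64 ≤
      logExpansion l' m' - π * m' / (8 * l') - 1 / 31 := by
  have hgap : l' + m' < l + m := by
    zify at *
    exact add_lt_add_of_mul_eq_mul hl hll' hl'm' harea
  have harea' : (l * m : ℝ) = l' * m' := by exact_mod_cast harea
  have herror := expansion_error_le (l := l) (m := m) (l' := l') (m' := m')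
    (by exact_mod_cast hl) (by exact_mod_cast hll') (by exact_mod_cast hl'm') harea'
    (by exact_mod_cast hgap)
  rw [logExpansion, logExpansion, harea']
  linarith

end Comparison

end GridSpanningTree

theorem balancing (l m l' m' : ℕ) (hl : 0 < l) (hm : 0 < m) (hl' : 0 < l') (hm' : 0 < m')
    (harea : l * m = l' * m') (h1 : l ≤ l') (h2 : l' ≤ m') (h3 : m' ≤ m) :
    gridTau l m ≤ gridTau l' m' := by
  open GridSpanningTree Real in
  rcases h1.eq_or_lt with rfl | hlt
  · rw [Nat.eq_of_mul_eq_mul_left hl harea]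
  have hlog := calc log (gridTau l m)
    _ ≤ logExpansion l m + 1 / 64 := log_gridTau_le hl hm
    _ ≤ logExpansion l' m' - π * m' / (8 * l') - 1 / 31 := logExpansion_add_le hl hlt h2 harea
    _ ≤ log (gridTau l' m') := le_log_gridTau hl' h2
  rwa [log_le_log_iff (Nat.cast_pos.2 (gridTau_pos hl hm)) (Nat.cast_pos.2 (gridTau_pos hl' hm')),
    Nat.cast_le] at hlog
end

section
/- Let ℓ, m, ℓ', m' be positive integers such that ℓ·m = ℓ'·m' and ℓ < ℓ' ≤ m' ≤ m. Then τ(ℓ,m) < τ(ℓ',m'): strictly balancing the side lengths strictly increases the number of spanning trees. -/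
/-!
By the matrix-tree theorem and the spectrum of the path, `τ(ℓ, m)` is the product of
`λ_i(ℓ) + λ_j(m)` over `1 ≤ i < ℓ` and `1 ≤ j < m`, where `λ_i(n) = 2 - 2 cos(π i / n)`. Let
`θ(x)` be the growth rate determined by `cosh θ(x) = 2 - cos x`, and put `θ_i = θ(π i / ℓ)` and
`γ = θ(π)`. Chebyshev polynomials turn the product over `j` into `sinh(m θ_i) / sinh θ_i`, and a
second such evaluation gives `τ² ℓ sinh(ℓ γ) = sinh γ · ∏ (2 sinh(m θ_i))²`. Up to bounded factors
the right-hand side is `exp(2 m S(ℓ) - m γ)`, where `S(ℓ) = ∑ θ_i + γ / 2` is the trapezoidal sum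
of `θ` over `[0, π]`.

The main terms compare because `S(ℓ) / ℓ` is nondecreasing: evaluating one double product in both
orders shows that `exp(2 n S(ℓ))` is asymptotically a product of factors `(2 sinh(ℓ φ_j))²` over
`j < n`, with growth rates `φ_j` independent of `ℓ`, and `(2 sinh(ℓ φ))^(1/ℓ)` increases with `ℓ`.
With `ℓ m` fixed, what remains is the factor `exp((ℓ + m) γ)` with `exp γ ≥ 5`: the gain from the
shorter perimeter beats both the factor `ℓ' / ℓ` and the bounded factors.
-/

open Filter Finset Matrix Topology
open scoped Real

section CauchyBinet

variable {R V K : Type*} [CommRing R] [Fintype V] [DecidableEq V]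

theorem det_sum_vecMulVec_eq_sum_injective [DecidableEq K] (b c : K → V → R) (A : Finset K) :
    (∑ k ∈ A, vecMulVec (b k) (c k)).det =
      ∑ f ∈ Fintype.piFinset fun _ : V => A with f.Injective,
        (of fun v => b (f v) v • c (f v)).det := by
  have hrows : ∑ k ∈ A, vecMulVec (b k) (c k) = fun v => ∑ k ∈ A, b k v • c k := by
    ext v w
    simp [Matrix.sum_apply, vecMulVec_apply]
  have hexpand := (detRowAlternating (R := R) (n := V)).toMultilinearMap.map_sum_finset
    (fun v k => b k v • c k) (fun _ => A)
  rw [hrows, sum_filter_of_ne]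
  · exact hexpand
  · intro f _ hdet u v huv
    by_contra hne
    refine hdet ?_
    have hscale : (of fun v => b (f v) v • c (f v)) =
        of fun v w => b (f v) v * (of fun v => c (f v)) v w := rfl
    rw [hscale, det_mul_column, det_zero_of_row_eq hne (by ext; simp [huv]), mul_zero]

/-- The Cauchy–Binet formula, with the product of an `n × k` and a `k × n` matrix written as a sum
of rank-one matrices. -/
theorem det_sum_vecMulVec (b c : K → V → R) (A : Finset K) :
    (∑ k ∈ A, vecMulVec (b k) (c k)).det =
      ∑ S ∈ A.powersetCard (Fintype.card V), (∑ k ∈ S, vecMulVec (b k) (c k)).det := by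
  classical
  have card_image {f : V → K} (hf : f.Injective) : (univ.image f).card = Fintype.card V := by
    rw [card_image_of_injective _ hf, card_univ]
  simp_rw [det_sum_vecMulVec_eq_sum_injective]
  rw [← sum_fiberwise_of_maps_to (t := A.powersetCard (Fintype.card V))
    (g := fun f : V → K => univ.image f)]
  · refine sum_congr rfl fun S hS => ?_
    obtain ⟨hSA, hScard⟩ := mem_powersetCard.1 hS
    congr 1
    ext f
    simp only [mem_filter, Fintype.mem_piFinset]
    constructor
    · rintro ⟨⟨-, hf⟩, rfl⟩
      exact ⟨fun v => mem_image_of_mem f (mem_univ v), hf⟩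
    · rintro ⟨hfS, hf⟩
      refine ⟨⟨fun v => hSA (hfS v), hf⟩, eq_of_subset_of_card_le ?_ ?_⟩
      · simpa [image_subset_iff] using hfS
      · rw [card_image hf, hScard]
  · simp only [mem_filter, Fintype.mem_piFinset, mem_powersetCard, image_subset_iff]
    exact fun f ⟨hfA, hf⟩ => ⟨fun v _ => hfA v, card_image hf⟩

theorem det_vecMulVec_add_sum_vecMulVec [Nonempty V] (u v : V → R) (b c : K → V → R)
    (A : Finset K) :
    (vecMulVec u v + ∑ k ∈ A, vecMulVec (b k) (c k)).det =
      (∑ k ∈ A, vecMulVec (b k) (c k)).det +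
        ∑ S ∈ A.powersetCard (Fintype.card V - 1),
          (vecMulVec u v + ∑ k ∈ S, vecMulVec (b k) (c k)).det := by
  classical
  let B : Option K → V → R := fun k => k.elim u b
  let C : Option K → V → R := fun k => k.elim v c
  have hsum (S : Finset K) : vecMulVec u v + ∑ k ∈ S, vecMulVec (b k) (c k) =
      ∑ k ∈ insert none (S.map .some), vecMulVec (B k) (C k) := by
    simp [B, C]
  have hinj : Set.InjOn (insert (none : Option K))
      ((A.map .some).powersetCard (Fintype.card V - 1) : Finset (Finset (Option K))) :=
    insert_erase_invOn.2.injOn.mono fun S hS hnone => by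
      simpa using (mem_powersetCard.1 (mem_coe.1 hS)).1 hnone
  have hdisj : Disjoint ((A.map .some).powersetCard (Fintype.card V - 1 + 1))
      (((A.map .some).powersetCard (Fintype.card V - 1)).image (insert none)) := by
    simp only [Finset.disjoint_left, mem_image, mem_powersetCard]
    rintro _ ⟨hS, -⟩ ⟨T, -, rfl⟩
    simpa using hS (mem_insert_self none T)
  rw [hsum, det_sum_vecMulVec, det_sum_vecMulVec b,
    ← Nat.sub_add_cancel (Fintype.card_pos (α := V)), powersetCard_succ_insert (by simp),
    sum_union hdisj, sum_image hinj, powersetCard_map, powersetCard_map, sum_map, sum_map]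
  simp [B, C]

end CauchyBinet

section MatrixTree

variable {V : Type*} [DecidableEq V]

/-- The oriented incidence vector of an edge, one column of the incidence matrix of a graph. The
orientation is the arbitrary one of `Quot.out`; only products of two entries of the vector, which
do not depend on it, matter. -/
noncomputable def orientedIncVec (e : Sym2 V) : V → ℤ :=
  Pi.single (Quot.out e).1 1 - Pi.single (Quot.out e).2 1

theorem orientedIncVec_mk (u v : V) :
    orientedIncVec s(u, v) = Pi.single u 1 - Pi.single v 1 ∨
      orientedIncVec s(u, v) = Pi.single v 1 - Pi.single u 1 := by
  have hout : s((Quot.out s(u, v)).1, (Quot.out s(u, v)).2) = s(u, v) := Quot.out_eq s(u, v)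
  rcases Sym2.eq_iff.1 hout with ⟨h₁, h₂⟩ | ⟨h₁, h₂⟩
  · left; rw [orientedIncVec, h₁, h₂]
  · right; rw [orientedIncVec, h₁, h₂]

theorem orientedIncVec_mul_of_ne {u v : V} (huv : u ≠ v) (e : Sym2 V) :
    orientedIncVec e u * orientedIncVec e v = if e = s(u, v) then -1 else 0 := by
  induction e with | _ a b
  rcases orientedIncVec_mk a b with h | h <;> rw [h] <;>
    simp only [Pi.sub_apply, Pi.single_apply, Sym2.eq_iff] <;> grind

theorem orientedIncVec_mul_self (u : V) {e : Sym2 V} (he : ¬e.IsDiag) :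
    orientedIncVec e u * orientedIncVec e u = if u ∈ e then 1 else 0 := by
  induction e with | _ a b
  rw [Sym2.mk_isDiag_iff] at he
  rcases orientedIncVec_mk a b with h | h <;> rw [h] <;>
    simp only [Pi.sub_apply, Pi.single_apply, Sym2.mem_iff] <;> grind

theorem span_orientedIncVec_eq_top [Finite V] {G : SimpleGraph V} (r : V)
    (hG : G.Connected) :
    Submodule.span ℤ (insert (Pi.single r 1) (orientedIncVec '' G.edgeSet)) = ⊤ := by
  set M := Submodule.span ℤ (insert (Pi.single r 1) (orientedIncVec '' G.edgeSet))
  have hadj_mem {u v : V} (huv : G.Adj u v) : Pi.single u 1 - Pi.single v 1 ∈ M := by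
    have hinc : orientedIncVec s(u, v) ∈ M :=
      Submodule.subset_span (Set.mem_insert_of_mem _ (Set.mem_image_of_mem _ huv))
    rcases orientedIncVec_mk u v with h | h <;> rw [h] at hinc
    · exact hinc
    · simpa using neg_mem hinc
  have hsingle (v : V) : Pi.single v 1 ∈ M := by
    induction hG.preconnected v r |>.some with
    | nil => exact Submodule.subset_span (Set.mem_insert _ _)
    | cons huv _ ih => simpa using add_mem (hadj_mem huv) (ih hadj_mem)
  rw [eq_top_iff, ← (Pi.basisFun ℤ V).span_eq, Submodule.span_le]
  rintro _ ⟨v, rfl⟩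
  simpa using hsingle v

variable [Fintype V]

theorem sum_vecMulVec_orientedIncVec (G : SimpleGraph V) [DecidableRel G.Adj] :
    ∑ e ∈ G.edgeFinset, vecMulVec (orientedIncVec e) (orientedIncVec e) = G.lapMatrix ℤ := by
  ext u v
  rw [Matrix.sum_apply]
  obtain rfl | huv := eq_or_ne u v
  · calc ∑ e ∈ G.edgeFinset, orientedIncVec e u * orientedIncVec e u
        = #{e ∈ G.edgeFinset | u ∈ e} := by
          rw [sum_congr rfl fun e he =>
            orientedIncVec_mul_self u (G.not_isDiag_of_mem_edgeFinset he), sum_boole]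
      _ = G.lapMatrix ℤ u u := by
          rw [← SimpleGraph.incidenceFinset_eq_filter, SimpleGraph.card_incidenceFinset_eq_degree]
          simp [SimpleGraph.lapMatrix, SimpleGraph.degMatrix]
  · calc ∑ e ∈ G.edgeFinset, orientedIncVec e u * orientedIncVec e v
        = if G.Adj u v then -1 else 0 := by
          simp_rw [orientedIncVec_mul_of_ne huv]
          simp
      _ = G.lapMatrix ℤ u v := by
          simp only [SimpleGraph.lapMatrix, SimpleGraph.degMatrix, Matrix.sub_apply,
            Matrix.diagonal_apply_ne _ huv, SimpleGraph.adjMatrix_apply]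
          split_ifs <;> simp

theorem lapMatrix_mulVec_eq_zero_of_forall_adj {R : Type*} [NonAssocRing R] (G : SimpleGraph V)
    [DecidableRel G.Adj] {x : V → R} (hx : ∀ u v, G.Adj u v → x u = x v) :
    G.lapMatrix R *ᵥ x = 0 := by
  ext u
  rw [SimpleGraph.lapMatrix_mulVec_apply,
    sum_congr rfl fun v hv => (hx u v ((G.mem_neighborFinset u v).1 hv)).symm, sum_const,
    SimpleGraph.card_neighborFinset_eq_degree, nsmul_eq_mul, sub_self, Pi.zero_apply]

/-- The Laplacian of `G` grounded at the vertex `r`: its determinant is the cofactor of the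
Laplacian at `r`. Adding `1` at `(r, r)`, rather than deleting the row and column of `r`, keeps
the index type. -/
def groundedLapMatrix (R : Type*) [Ring R] (G : SimpleGraph V) [DecidableRel G.Adj] (r : V) :
    Matrix V V R :=
  vecMulVec (Pi.single r 1) (Pi.single r 1) + G.lapMatrix R

theorem map_groundedLapMatrix {R S : Type*} [Ring R] [Ring S] (f : R →+* S) (G : SimpleGraph V)
    [DecidableRel G.Adj] (r : V) :
    f.mapMatrix (groundedLapMatrix R G r) = groundedLapMatrix S G r := by
  ext u v
  simp [groundedLapMatrix, SimpleGraph.lapMatrix, SimpleGraph.degMatrix, vecMulVec_apply,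
    SimpleGraph.adjMatrix_apply, Matrix.diagonal_apply, Pi.single_apply, apply_ite f]

theorem det_groundedLapMatrix_of_not_connected {R : Type*} [CommRing R] [IsDomain R]
    {G : SimpleGraph V} [DecidableRel G.Adj] (r : V) (hG : ¬G.Connected) :
    (groundedLapMatrix R G r).det = 0 := by
  classical
  obtain ⟨v, hv⟩ : ∃ v, ¬G.Reachable r v := by
    simpa [SimpleGraph.connected_iff_exists_forall_reachable] using
      mt (fun h => (SimpleGraph.connected_iff_exists_forall_reachable G).2 ⟨r, h⟩) hG
  let x : V → R := fun u => if G.Reachable r u then 0 else 1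
  have hlap : G.lapMatrix R *ᵥ x = 0 := by
    refine lapMatrix_mulVec_eq_zero_of_forall_adj G fun u w huw => ?_
    have : G.Reachable r u ↔ G.Reachable r w :=
      ⟨fun h => h.trans huw.reachable, fun h => h.trans huw.symm.reachable⟩
    simp only [x, this]
  refine exists_mulVec_eq_zero_iff.1 ⟨x, fun hx => ?_, ?_⟩
  · simpa [x, hv] using congrFun hx v
  · simp [groundedLapMatrix, add_mulVec, hlap, vecMulVec_mulVec, x]

theorem det_sum_vecMulVec_self_of_span_eq_top {K : Type*} [Fintype K] {b : K → V → ℤ}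
    (hcard : Fintype.card K = Fintype.card V) (hb : Submodule.span ℤ (Set.range b) = ⊤) :
    (∑ k, vecMulVec (b k) (b k)).det = 1 := by
  let e : V ≃ K := Fintype.equivOfCardEq hcard.symm
  let B : Matrix V V ℤ := of (b ∘ e)
  have hsum : ∑ k, vecMulVec (b k) (b k) = Bᵀ * B := by
    ext u v
    rw [← e.sum_comp]
    simp [B, Matrix.sum_apply, vecMulVec_apply, Matrix.mul_apply]
  have hunit : IsUnit B.det := by
    rw [← isUnit_iff_isUnit_det, ← vecMul_surjective_iff_isUnit]
    have hrange : LinearMap.range B.vecMulLinear = ⊤ := by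
      rw [range_vecMulLinear, ← hb, ← e.surjective.range_comp b]
      rfl
    exact LinearMap.range_eq_top.1 hrange
  rw [hsum, det_mul, det_transpose, Int.isUnit_mul_self hunit]

theorem det_groundedLapMatrix_of_isTree {G : SimpleGraph V} [DecidableRel G.Adj] (r : V)
    (hG : G.IsTree) : (groundedLapMatrix ℤ G r).det = 1 := by
  let b : Option G.edgeFinset → V → ℤ := fun k => k.elim (Pi.single r 1) fun e => orientedIncVec e
  have hsum : groundedLapMatrix ℤ G r = ∑ k, vecMulVec (b k) (b k) := by
    rw [Fintype.sum_option, groundedLapMatrix, ← sum_vecMulVec_orientedIncVec]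
    exact congrArg _ (sum_coe_sort G.edgeFinset _).symm
  have hcard : Fintype.card (Option G.edgeFinset) = Fintype.card V := by
    rw [Fintype.card_option, Fintype.card_coe, hG.card_edgeFinset]
  have hrange : Set.range b = insert (Pi.single r 1) (orientedIncVec '' G.edgeSet) := by
    rw [Option.range_eq, ← SimpleGraph.coe_edgeFinset, Set.image_eq_range]
    rfl
  rw [hsum, det_sum_vecMulVec_self_of_span_eq_top hcard]
  rw [hrange, span_orientedIncVec_eq_top r hG.connected]

theorem edgeFinset_fromEdgeSet_of_subset {V : Type*} {G : SimpleGraph V} [Fintype G.edgeSet]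
    {E : Finset (Sym2 V)} {_ : Fintype (SimpleGraph.fromEdgeSet (E : Set (Sym2 V))).edgeSet}
    (hE : E ⊆ G.edgeFinset) :
    (SimpleGraph.fromEdgeSet (E : Set (Sym2 V))).edgeFinset = E := by
  ext e
  simpa using fun he => G.not_isDiag_of_mem_edgeFinset (hE he)

/-- The number `τ(G)` of spanning trees of `G`; it is `0` when `G` has infinitely many. -/
noncomputable def spanningTreeCount {V : Type*} (G : SimpleGraph V) : ℕ :=
  {H : G.Subgraph | H.IsSpanning ∧ H.coe.IsTree}.ncard

theorem spanningTreeCount_eq_ncard {V : Type*} (G : SimpleGraph V) :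
    spanningTreeCount G = {T : SimpleGraph V | T ≤ G ∧ T.IsTree}.ncard := by
  have isTree_coe {H : G.Subgraph} (hH : H.IsSpanning) : H.coe.IsTree ↔ H.spanningCoe.IsTree :=
    (SimpleGraph.Iso.isTree_iff (H.spanningCoeEquivCoeOfSpanning hH)).symm
  refine Set.ncard_congr (fun H _ => H.spanningCoe) ?_ ?_ ?_
  · exact fun H ⟨hH, htree⟩ => ⟨H.spanningCoe_le, (isTree_coe hH).1 htree⟩
  · intro H K ⟨hH, _⟩ ⟨hK, _⟩ heq
    ext u v
    · exact ⟨fun _ => hK u, fun _ => hH u⟩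
    · exact iff_of_eq (congrArg (fun T : SimpleGraph V => T.Adj u v) heq)
  · intro T ⟨hTG, hT⟩
    have hspan := SimpleGraph.toSubgraph.isSpanning T hTG
    exact ⟨SimpleGraph.toSubgraph T hTG, ⟨hspan, (isTree_coe hspan).2 hT⟩, rfl⟩

open Classical in
theorem spanningTreeCount_eq_card {V : Type*} [Fintype V] [Nonempty V] (G : SimpleGraph V)
    [Fintype G.edgeSet] : spanningTreeCount G =
      #((G.edgeFinset.powersetCard (Fintype.card V - 1)).filter fun E : Finset (Sym2 V) =>
        (SimpleGraph.fromEdgeSet (E : Set (Sym2 V))).IsTree) := by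
  rw [spanningTreeCount_eq_ncard, ← Set.ncard_coe_finset]
  refine Set.ncard_congr (fun T _ => T.edgeFinset) ?_ ?_ ?_
  · intro T ⟨hTG, hT⟩
    rw [mem_coe, mem_filter, mem_powersetCard, SimpleGraph.coe_edgeFinset,
      SimpleGraph.fromEdgeSet_edgeSet, ← hT.card_edgeFinset, Nat.add_sub_cancel]
    exact ⟨⟨SimpleGraph.edgeFinset_subset_edgeFinset.2 hTG, rfl⟩, hT⟩
  · exact fun T U _ _ h => SimpleGraph.edgeFinset_inj.1 h
  · intro E hE
    rw [mem_coe, mem_filter, mem_powersetCard] at hE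
    obtain ⟨⟨hEG, -⟩, hE⟩ := hE
    refine ⟨_, ⟨SimpleGraph.edgeFinset_subset_edgeFinset.1 ?_, hE⟩, ?_⟩
    · exact (edgeFinset_fromEdgeSet_of_subset hEG).trans_subset hEG
    · exact edgeFinset_fromEdgeSet_of_subset hEG

theorem det_groundedLapMatrix (G : SimpleGraph V) [DecidableRel G.Adj] (r : V) :
    (groundedLapMatrix ℤ G r).det = spanningTreeCount G := by
  classical
  have : Nonempty V := ⟨r⟩
  have hzero : (G.lapMatrix ℤ).det = 0 :=
    exists_mulVec_eq_zero_iff.1 ⟨_, Function.const_ne_zero.2 one_ne_zero,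
      G.lapMatrix_mulVec_const_eq_zero⟩
  rw [groundedLapMatrix, ← sum_vecMulVec_orientedIncVec, det_vecMulVec_add_sum_vecMulVec,
    sum_vecMulVec_orientedIncVec, hzero, zero_add, spanningTreeCount_eq_card, ← sum_boole]
  refine sum_congr rfl fun E hE => ?_
  obtain ⟨hEG, hEcard⟩ := mem_powersetCard.1 hE
  let T := SimpleGraph.fromEdgeSet (E : Set (Sym2 V))
  have hlap : vecMulVec (Pi.single r 1) (Pi.single r 1) +
      ∑ e ∈ E, vecMulVec (orientedIncVec e) (orientedIncVec e) = groundedLapMatrix ℤ T r := by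
    rw [groundedLapMatrix, ← sum_vecMulVec_orientedIncVec T]
    rw [edgeFinset_fromEdgeSet_of_subset hEG]
  rw [hlap]
  split_ifs with htree
  · exact det_groundedLapMatrix_of_isTree r htree
  · refine det_groundedLapMatrix_of_not_connected r fun hconn => htree ?_
    rw [SimpleGraph.isTree_iff_connected_and_card]
    refine ⟨hconn, ?_⟩
    rw [Nat.card_eq_fintype_card, Nat.card_eq_fintype_card, ← SimpleGraph.edgeFinset_card,
      edgeFinset_fromEdgeSet_of_subset hEG, hEcard, Nat.sub_add_cancel Fintype.card_pos]

end MatrixTree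

section Spectral

variable {R V : Type*} [CommRing R] [Fintype V] [DecidableEq V]

theorem card_mul_det_groundedLapMatrix (G : SimpleGraph V) [DecidableRel G.Adj] (r : V) :
    Fintype.card V * (groundedLapMatrix R G r).det =
      (G.lapMatrix R + vecMulVec (Pi.single r 1) 1).det := by
  have hfactor : G.lapMatrix R + vecMulVec (Pi.single r 1) 1 =
      groundedLapMatrix R G r * (1 + vecMulVec 1 (1 - Pi.single r 1)) := by
    have hone : groundedLapMatrix R G r *ᵥ 1 = Pi.single r 1 := by
      rw [groundedLapMatrix, add_mulVec,
        lapMatrix_mulVec_eq_zero_of_forall_adj G fun _ _ _ => rfl, vecMulVec_mulVec]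
      simp
    rw [mul_add, mul_one, mul_vecMulVec, hone, vecMulVec_sub, groundedLapMatrix]
    abel
  have hdet : (1 + vecMulVec (1 : V → R) (1 - Pi.single r 1)).det = Fintype.card V := by
    rw [vecMulVec_eq Unit, det_one_add_replicateCol_mul_replicateRow]
    simp [sub_dotProduct]
  rw [hfactor, det_mul, hdet, mul_comm]

theorem det_diagonal_add_vecMulVec_single {D : V → R} {k : V} (hD : D k = 0) (w : V → R) :
    (diagonal D + vecMulVec w (Pi.single k 1)).det = w k * ∏ i ∈ univ.erase k, D i := by
  have hcol : diagonal D + vecMulVec w (Pi.single k 1) = (diagonal D).updateCol k w := by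
    ext i j
    obtain rfl | hj := eq_or_ne j k
    · obtain rfl | hi := eq_or_ne i j <;> simp [vecMulVec_apply, *]
    · simp [vecMulVec_apply, hj]
  rw [hcol, ← cramer_apply, cramer_eq_adjugate_mulVec, adjugate_diagonal, mulVec_diagonal,
    mul_comm]

theorem card_mul_det_groundedLapMatrix_eq_prod (G : SimpleGraph V) [DecidableRel G.Adj] (r : V)
    {W : Matrix V V R} {D : V → R} {k : V} (hW : IsUnit W.det)
    (hWD : W * G.lapMatrix R = diagonal D * W) (hk : W k = 1) (hD : D k = 0) :
    Fintype.card V * (groundedLapMatrix R G r).det = ∏ i ∈ univ.erase k, D i := by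
  have hconj : W * (G.lapMatrix R + vecMulVec (Pi.single r 1) 1) =
      (diagonal D + vecMulVec (W *ᵥ Pi.single r 1) (Pi.single k 1)) * W := by
    rw [mul_add, add_mul, hWD, mul_vecMulVec, vecMulVec_mul, single_one_vecMul, row, hk]
  have hdet := congrArg det hconj
  rw [det_mul, det_mul, det_diagonal_add_vecMulVec_single hD, mul_comm, hW.mul_left_inj,
    mulVec_single_one, col_apply, hk, Pi.one_apply, one_mul] at hdet
  rw [card_mul_det_groundedLapMatrix, hdet]

theorem card_mul_spanningTreeCount_eq_prod (G : SimpleGraph V) [DecidableRel G.Adj]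
    {W : Matrix V V R} {D : V → R} {k : V} (hW : IsUnit W.det)
    (hWD : W * G.lapMatrix R = diagonal D * W) (hk : W k = 1) (hD : D k = 0) :
    (Fintype.card V : R) * spanningTreeCount G = ∏ i ∈ univ.erase k, D i := by
  rw [← card_mul_det_groundedLapMatrix_eq_prod G k hW hWD hk hD,
    ← map_groundedLapMatrix (Int.castRingHom R), ← RingHom.map_det, det_groundedLapMatrix]
  simp

theorem lapMatrix_boxProd {α β : Type*} [Fintype α] [Fintype β] [DecidableEq α] [DecidableEq β]
    (G : SimpleGraph α) (H : SimpleGraph β) [DecidableRel G.Adj] [DecidableRel H.Adj]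
    [DecidableRel (G.boxProd H).Adj] :
    (G.boxProd H).lapMatrix R = kroneckerMap (· * ·) (G.lapMatrix R) (1 : Matrix β β R) +
      kroneckerMap (· * ·) (1 : Matrix α α R) (H.lapMatrix R) := by
  ext ⟨a, b⟩ ⟨c, d⟩
  obtain rfl | hac := eq_or_ne a c <;> obtain rfl | hbd := eq_or_ne b d
  · simp only [SimpleGraph.lapMatrix, SimpleGraph.degMatrix, Matrix.sub_apply, Matrix.add_apply,
      Matrix.diagonal_apply_eq, SimpleGraph.adjMatrix_apply, SimpleGraph.irrefl, if_false,
      sub_zero, kroneckerMap_apply, Matrix.one_apply_eq, mul_one, one_mul]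
    rw [← Nat.cast_add]
    congr 1
    convert SimpleGraph.degree_boxProd (G := G) (H := H) (a, b)
  all_goals simp [SimpleGraph.lapMatrix, SimpleGraph.degMatrix, SimpleGraph.adjMatrix_apply, *]

end Spectral

section Chebyshev

open Polynomial

theorem eval_eq_leadingCoeff_mul_prod {R ι : Type*} [CommRing R] [IsDomain R] [DecidableEq R]
    {p : R[X]} {s : Finset ι} {c : ι → R} (hinj : Set.InjOn c s)
    (hroots : p.roots = (s.image c).val) (hdeg : p.natDegree = #s) (x : R) :
    p.eval x = p.leadingCoeff * ∏ i ∈ s, (x - c i) := by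
  have hsplits : p.Splits := by
    rw [splits_iff_card_roots, hroots, hdeg, card_val, card_image_of_injOn hinj]
  rw [hsplits.eval_eq_prod_roots, hroots, ← prod_image (f := fun a => x - a) hinj]
  rfl

theorem prod_two_mul_sub_two_mul_cos_eq_eval_U (n : ℕ) (x : ℝ) :
    ∏ i ∈ range n, (2 * x - 2 * Real.cos ((i + 1) * π / (n + 1))) =
      (Chebyshev.U ℝ n).eval x := by
  rw [eval_eq_leadingCoeff_mul_prod
    ((range n).nodup_map_iff_injOn.1 (Chebyshev.roots_U_real_nodup n))
    (Chebyshev.roots_U_real n) (by simp), Chebyshev.leadingCoeff_U_natCast]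
  simp_rw [← mul_sub, prod_mul_distrib, prod_const, card_range]

theorem prod_two_mul_sub_two_mul_cos_eq_two_mul_eval_T {n : ℕ} (hn : n ≠ 0) (x : ℝ) :
    ∏ i ∈ range n, (2 * x - 2 * Real.cos ((2 * i + 1) * π / (2 * n))) =
      2 * (Chebyshev.T ℝ n).eval x := by
  rw [eval_eq_leadingCoeff_mul_prod
    ((range n).nodup_map_iff_injOn.1 (Chebyshev.roots_T_real_nodup n))
    (Chebyshev.roots_T_real n) (by simp), Chebyshev.leadingCoeff_T, ← mul_assoc, ← pow_succ',
    Int.natAbs_natCast, Nat.sub_add_cancel (Nat.one_le_iff_ne_zero.2 hn)]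
  simp_rw [← mul_sub, prod_mul_distrib, prod_const, card_range]

/-- The eigenvalue of index `i`, for `0 ≤ i < n`, of the Laplacian of the path on `n` vertices. -/
noncomputable def pathEigenvalue (n i : ℕ) : ℝ := 2 - 2 * Real.cos (π * i / n)

theorem prod_add_pathEigenvalue {n : ℕ} (hn : n ≠ 0) (x : ℝ) :
    ∏ i ∈ Ico 1 n, (x + pathEigenvalue n i) = (Chebyshev.U ℝ (n - 1)).eval (1 + x / 2) := by
  obtain ⟨k, rfl⟩ := Nat.exists_eq_succ_of_ne_zero hn
  rw [Nat.cast_succ, add_sub_cancel_right, ← prod_two_mul_sub_two_mul_cos_eq_eval_U,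
    prod_Ico_eq_prod_range, Nat.succ_sub_one]
  refine prod_congr rfl fun i _ => ?_
  rw [pathEigenvalue, Nat.cast_add, Nat.cast_one, Nat.cast_succ]
  ring_nf

theorem prod_pathEigenvalue {n : ℕ} (hn : n ≠ 0) : ∏ i ∈ Ico 1 n, pathEigenvalue n i = n := by
  simpa using prod_add_pathEigenvalue hn 0

theorem sinh_mul_prod_two_mul_cosh_sub {n : ℕ} (hn : n ≠ 0) (θ : ℝ) :
    Real.sinh θ * ∏ i ∈ Ico 1 n, (2 * Real.cosh θ - 2 + pathEigenvalue n i) =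
      Real.sinh (n * θ) := by
  rw [prod_add_pathEigenvalue hn, mul_comm]
  convert Chebyshev.U_real_cosh θ (n - 1) using 3
  · ring
  · push_cast; ring

theorem prod_two_mul_cosh_sub_two_mul_cos {n : ℕ} (hn : n ≠ 0) (θ : ℝ) :
    ∏ i ∈ range n, (2 * Real.cosh θ - 2 * Real.cos ((2 * i + 1) * π / (2 * n))) =
      2 * Real.cosh (n * θ) := by
  rw [prod_two_mul_sub_two_mul_cos_eq_two_mul_eval_T hn, Chebyshev.T_real_cosh, Int.cast_natCast]

end Chebyshev

section Grid

theorem lapMatrix_pathGraph_mulVec {R : Type*} [Ring R] {n : ℕ}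
    [DecidableRel (SimpleGraph.pathGraph n).Adj] {x : ℤ → R} (hx₀ : x (-1) = x 0)
    (hxn : x n = x (n - 1)) (a : Fin n) :
    ((SimpleGraph.pathGraph n).lapMatrix R *ᵥ fun b => x b) a =
      (x a - x (a + 1)) + (x a - x (a - 1)) := by
  have hright : ∑ b : Fin n, (if (a : ℕ) + 1 = b then x a - x b else 0) = x a - x (a + 1) := by
    rw [Fin.sum_univ_eq_sum_range (fun b => if (a : ℕ) + 1 = b then x a - x b else 0), sum_ite_eq]
    split_ifs with h
    · push_cast; rfl
    · have hlast : (a + 1 : ℤ) = n := by grind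
      rw [hlast, hxn, eq_sub_of_add_eq hlast, sub_self]
  have hleft : ∑ b : Fin n, (if (b : ℕ) + 1 = a then x a - x b else 0) = x a - x (a - 1) := by
    rw [Fin.sum_univ_eq_sum_range (fun b => if b + 1 = (a : ℕ) then x a - x b else 0)]
    rcases hk : (a : ℕ) with _ | k
    · simp [hx₀]
    · have hkn : k ∈ range n := by grind
      simp_rw [add_left_inj]
      rw [sum_ite_eq', if_pos hkn]
      push_cast
      rw [add_sub_cancel_right]
  rw [SimpleGraph.lapMatrix_mulVec_apply, ← SimpleGraph.card_neighborFinset_eq_degree,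
    ← nsmul_eq_mul, ← sum_const, ← sum_sub_distrib, SimpleGraph.neighborFinset_eq_filter,
    sum_filter, ← hright, ← hleft, ← sum_add_distrib]
  refine sum_congr rfl fun b _ => ?_
  simp only [SimpleGraph.pathGraph_adj]
  split_ifs <;> first | omega | simp

/-- The matrix whose row of index `i` is the eigenvector `a ↦ cos (π i (a + 1/2) / n)` of the
Laplacian of the path on `n` vertices. -/
noncomputable def pathEigenvectors (n : ℕ) : Matrix (Fin n) (Fin n) ℝ :=
  of fun i a => Real.cos (π * (i : ℕ) / n * ((a : ℕ) + 1 / 2))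

theorem lapMatrix_mulVec_pathEigenvectors (n : ℕ) [DecidableRel (SimpleGraph.pathGraph n).Adj]
    (i : Fin n) :
    (SimpleGraph.pathGraph n).lapMatrix ℝ *ᵥ pathEigenvectors n i =
      pathEigenvalue n i • pathEigenvectors n i := by
  have hn : (n : ℝ) ≠ 0 := Nat.cast_ne_zero.2 i.pos.ne'
  set t : ℝ := π * (i : ℕ) / n with ht
  let x : ℤ → ℝ := fun z => Real.cos (t * (z + 1 / 2))
  have hx₀ : x (-1) = x 0 := by
    simp only [x]
    rw [← Real.cos_neg]
    push_cast
    ring_nf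
  have hxn : x n = x (n - 1) := by
    simp only [x]
    rw [← Real.cos_neg, ← Real.cos_add_int_mul_two_pi _ (i : ℕ), ht]
    congr 1
    push_cast
    field_simp
    ring
  have hrow : pathEigenvectors n i = fun b : Fin n => x b := by
    ext b
    simp [pathEigenvectors, x, ht]
  have hrec (z : ℤ) : (x z - x (z + 1)) + (x z - x (z - 1)) = pathEigenvalue n i * x z := by
    have hplus : t * ((z + 1 : ℤ) + 1 / 2) = t * (z + 1 / 2) + t := by push_cast; ring
    have hminus : t * ((z - 1 : ℤ) + 1 / 2) = t * (z + 1 / 2) - t := by push_cast; ring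
    simp only [x, hplus, hminus, Real.cos_add, Real.cos_sub, pathEigenvalue, ← ht]
    ring
  ext a
  rw [hrow, lapMatrix_pathGraph_mulVec hx₀ hxn, hrec, Pi.smul_apply, smul_eq_mul]

theorem pathEigenvectors_mul_lapMatrix (n : ℕ) [DecidableRel (SimpleGraph.pathGraph n).Adj] :
    pathEigenvectors n * (SimpleGraph.pathGraph n).lapMatrix ℝ =
      diagonal (fun i : Fin n => pathEigenvalue n i) * pathEigenvectors n := by
  ext i a
  have hrow := congrFun (lapMatrix_mulVec_pathEigenvectors n i) a
  rw [← (SimpleGraph.isSymm_lapMatrix ℝ (SimpleGraph.pathGraph n)).eq, mulVec_transpose] at hrow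
  rw [diagonal_mul]
  exact hrow

theorem pathEigenvalue_injective (n : ℕ) :
    Function.Injective fun i : Fin n => pathEigenvalue n i := by
  intro i j hij
  have hn : (0 : ℝ) < n := Nat.cast_pos.2 i.pos
  have hmem (i : Fin n) : π * (i : ℕ) / n ∈ Set.Icc 0 π := by
    have hi : ((i : ℕ) : ℝ) ≤ n := Nat.cast_le.2 i.2.le
    exact ⟨by positivity, (div_le_iff₀ hn).2 (by gcongr)⟩
  have hcos : Real.cos (π * (i : ℕ) / n) = Real.cos (π * (j : ℕ) / n) := by
    simpa [pathEigenvalue] using hij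
  have harg := Real.injOn_cos (hmem i) (hmem j) hcos
  field_simp at harg
  exact Fin.ext (Nat.cast_injective harg)

theorem isUnit_det_pathEigenvectors (n : ℕ) : IsUnit (pathEigenvectors n).det := by
  classical
  rw [← isUnit_iff_isUnit_det, ← linearIndependent_rows_iff_isUnit]
  refine Module.End.eigenvectors_linearIndependent'
    (toLin' ((SimpleGraph.pathGraph n).lapMatrix ℝ)) _ (pathEigenvalue_injective n) _ fun i => ?_
  rw [Module.End.hasEigenvector_iff, Module.End.mem_eigenspace_iff]
  refine ⟨lapMatrix_mulVec_pathEigenvectors n i, fun hzero => ?_⟩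
  have hcos : Real.cos (π * (i : ℕ) / n * (1 / 2)) = 0 := by
    simpa [pathEigenvectors, row] using congrFun hzero ⟨0, i.pos⟩
  have hn : (0 : ℝ) < n := Nat.cast_pos.2 i.pos
  have hlt : π * (i : ℕ) / n < π := by
    rw [div_lt_iff₀ hn]
    gcongr
    exact i.2
  have hnonneg : 0 ≤ π * (i : ℕ) / n := by positivity
  exact (Real.cos_pos_of_mem_Ioo ⟨by linarith [Real.pi_pos], by linarith⟩).ne' hcos

theorem mul_gridTau_eq_prod_erase (l m : ℕ) [NeZero l] [NeZero m] :
    (l * m : ℝ) * gridTau l m =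
      ∏ k ∈ univ.erase (0 : Fin l × Fin m), (pathEigenvalue l k.1 + pathEigenvalue m k.2) := by
  classical
  have hW : IsUnit (kroneckerMap (· * ·) (pathEigenvectors l) (pathEigenvectors m)).det := by
    rw [det_kronecker]
    exact ((isUnit_det_pathEigenvectors l).pow _).mul ((isUnit_det_pathEigenvectors m).pow _)
  have hWD : kroneckerMap (· * ·) (pathEigenvectors l) (pathEigenvectors m) *
        (gridGraph l m).lapMatrix ℝ =
      diagonal (fun k : Fin l × Fin m => pathEigenvalue l k.1 + pathEigenvalue m k.2) *
        kroneckerMap (· * ·) (pathEigenvectors l) (pathEigenvectors m) := by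
    have hlap : (gridGraph l m).lapMatrix ℝ = _ :=
      lapMatrix_boxProd (SimpleGraph.pathGraph l) (SimpleGraph.pathGraph m)
    rw [hlap, mul_add, ← mul_kronecker_mul, ← mul_kronecker_mul, pathEigenvectors_mul_lapMatrix,
      pathEigenvectors_mul_lapMatrix, mul_one, mul_one]
    ext ⟨i, j⟩ ⟨a, b⟩
    simp only [Matrix.add_apply, kroneckerMap_apply, diagonal_mul]
    ring
  have hk : kroneckerMap (· * ·) (pathEigenvectors l) (pathEigenvectors m) 0 = 1 := by
    ext
    simp [pathEigenvectors]
  have hcount := card_mul_spanningTreeCount_eq_prod _ hW hWD hk (by simp [pathEigenvalue])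
  rwa [Fintype.card_prod, Fintype.card_fin, Fintype.card_fin, Nat.cast_mul] at hcount

theorem prod_erase_zero {M : Type*} [CommMonoid M] (l m : ℕ) [NeZero l] [NeZero m]
    (f : ℕ → ℕ → M) :
    ∏ k ∈ univ.erase (0 : Fin l × Fin m), f k.1 k.2 =
      ((∏ j ∈ Ico 1 m, f 0 j) * ∏ i ∈ Ico 1 l, f i 0) * ∏ i ∈ Ico 1 l, ∏ j ∈ Ico 1 m, f i j := by
  let g (i j : ℕ) : M := if i = 0 ∧ j = 0 then 1 else f i j
  calc ∏ k ∈ univ.erase (0 : Fin l × Fin m), f k.1 k.2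
      = ∏ k : Fin l × Fin m, g k.1 k.2 := by
        rw [← mul_prod_erase univ _ (mem_univ 0)]
        simp only [g, Prod.fst_zero, Prod.snd_zero, Fin.val_zero, and_self, if_true, one_mul]
        refine prod_congr rfl fun k hk => (if_neg fun h => ne_of_mem_erase hk ?_).symm
        exact Prod.ext (Fin.val_eq_zero_iff.1 h.1) (Fin.val_eq_zero_iff.1 h.2)
    _ = ∏ i ∈ range l, ∏ j ∈ range m, g i j := by
        rw [Fintype.prod_prod_type, ← Fin.prod_univ_eq_prod_range]
        exact prod_congr rfl fun i _ => Fin.prod_univ_eq_prod_range (g i) m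
    _ = (∏ j ∈ Ico 1 m, g 0 j) * ∏ i ∈ Ico 1 l, g i 0 * ∏ j ∈ Ico 1 m, g i j := by
        simp only [range_eq_Ico, prod_eq_prod_Ico_succ_bot (NeZero.pos l),
          prod_eq_prod_Ico_succ_bot (NeZero.pos m), zero_add]
        simp [g]
    _ = _ := by
        rw [prod_mul_distrib, ← mul_assoc]
        congr! 3 with j hj i hi i _ j hj
        all_goals exact if_neg (by grind)

theorem gridTau_eq_prod {l m : ℕ} (hl : l ≠ 0) (hm : m ≠ 0) :
    (gridTau l m : ℝ) =
      ∏ i ∈ Ico 1 l, ∏ j ∈ Ico 1 m, (pathEigenvalue l i + pathEigenvalue m j) := by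
  have : NeZero l := ⟨hl⟩
  have : NeZero m := ⟨hm⟩
  have hlm : (l * m : ℝ) ≠ 0 := by positivity
  have hzero (n : ℕ) : pathEigenvalue n 0 = 0 := by simp [pathEigenvalue]
  have hprod := mul_gridTau_eq_prod_erase l m
  rw [prod_erase_zero l m fun i j => pathEigenvalue l i + pathEigenvalue m j] at hprod
  simp only [hzero, zero_add, add_zero, prod_pathEigenvalue hl, prod_pathEigenvalue hm] at hprod
  rw [mul_comm (m : ℝ)] at hprod
  exact mul_left_cancel₀ hlm hprod

end Grid

section GrowthRate

/-- The exponential growth rate of the solutions of `u (k + 1) + u (k - 1) = (4 - 2 * cos x) * u k`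
for `0 ≤ x ≤ 2 * π`, that is, the real `θ ≥ 0` with `cosh θ = 2 - cos x`. -/
noncomputable def growthRate (x : ℝ) : ℝ := 2 * Real.arsinh (Real.sin (x / 2))

theorem cosh_growthRate (x : ℝ) : Real.cosh (growthRate x) = 2 - Real.cos x := by
  rw [growthRate, Real.cosh_two_mul, Real.cosh_sq, Real.sinh_arsinh, Real.sin_sq_eq_half_sub,
    mul_div_cancel₀ x two_ne_zero]
  ring

theorem growthRate_pos {x : ℝ} (hx₀ : 0 < x) (hx : x < 2 * π) : 0 < growthRate x :=
  mul_pos two_pos <| Real.arsinh_pos_iff.2 <|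
    Real.sin_pos_of_pos_of_lt_pi (half_pos hx₀) (by linarith)

theorem growthRate_pi_pos : 0 < growthRate π :=
  growthRate_pos Real.pi_pos (by linarith [Real.pi_pos])

theorem growthRate_pi_mul_div_pos {n i : ℕ} (hi : i ∈ Ico 1 n) : 0 < growthRate (π * i / n) := by
  obtain ⟨hi₀, hin⟩ := mem_Ico.1 hi
  have hi₀' : (0 : ℝ) < i := Nat.cast_pos.2 hi₀
  have hin' : (i : ℝ) < n := Nat.cast_lt.2 hin
  have hn : (0 : ℝ) < n := hi₀'.trans hin'
  refine growthRate_pos (by positivity) ?_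
  rw [div_lt_iff₀ hn]
  nlinarith [Real.pi_pos]

theorem growthRate_odd_mul_pi_div_pos {n j : ℕ} (hj : j < n) :
    0 < growthRate ((2 * j + 1) * π / (2 * n)) := by
  have hjn : (j : ℝ) + 1 ≤ n := by exact_mod_cast hj
  have hn : (0 : ℝ) < n := lt_of_lt_of_le (by positivity) hjn
  refine growthRate_pos (by positivity) ?_
  rw [div_lt_iff₀ (by positivity)]
  nlinarith [Real.pi_pos]

theorem two_mul_cosh_growthRate_sub_two (n i : ℕ) :
    2 * Real.cosh (growthRate (π * i / n)) - 2 = pathEigenvalue n i := by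
  rw [cosh_growthRate, pathEigenvalue]
  ring

theorem two_mul_sinh_sq (θ : ℝ) :
    (2 * Real.sinh θ) ^ 2 = (2 * Real.cosh θ - 2) * (2 * Real.cosh θ + 2) := by
  rw [mul_pow, Real.sinh_sq]
  ring

theorem two_mul_sinh_eq (x : ℝ) :
    2 * Real.sinh x = Real.exp x * (1 - Real.exp (-(2 * x))) := by
  rw [mul_sub, ← Real.exp_add, Real.sinh_eq]
  ring_nf

/-- The product of the values `2 * sinh (m * θ)` over the growth rates `θ` attached to the nonzero
eigenvalues of the path on `l` vertices. -/
noncomputable def sinhProd (l m : ℕ) : ℝ :=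
  ∏ i ∈ Ico 1 l, 2 * Real.sinh (m * growthRate (π * i / l))

/-- The product of the values `2 * cosh (m * θ)` over the growth rates `θ` attached to the nonzero
eigenvalues of the path on `l` vertices. -/
noncomputable def coshProd (l m : ℕ) : ℝ :=
  ∏ i ∈ Ico 1 l, 2 * Real.cosh (m * growthRate (π * i / l))

/-- The trapezoidal sum of `growthRate` on `[0, π]` with mesh `π / l`. -/
noncomputable def growthSum (l : ℕ) : ℝ :=
  ∑ i ∈ Ico 1 l, growthRate (π * i / l) + growthRate π / 2

theorem gridTau_mul_sinhProd_one {l m : ℕ} (hl : l ≠ 0) (hm : m ≠ 0) :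
    gridTau l m * sinhProd l 1 = sinhProd l m := by
  rw [gridTau_eq_prod hl hm, sinhProd, sinhProd, ← prod_mul_distrib]
  refine prod_congr rfl fun i _ => ?_
  rw [← sinh_mul_prod_two_mul_cosh_sub hm, two_mul_cosh_growthRate_sub_two, Nat.cast_one, one_mul]
  ring

theorem sinhProd_one_sq_mul_sinh {l : ℕ} (hl : l ≠ 0) :
    sinhProd l 1 ^ 2 * Real.sinh (growthRate π) = l * Real.sinh (l * growthRate π) := by
  have hprod : sinhProd l 1 ^ 2 = l * ∏ i ∈ Ico 1 l, (4 + pathEigenvalue l i) := by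
    rw [← prod_pathEigenvalue hl, ← prod_mul_distrib, sinhProd, ← prod_pow]
    refine prod_congr rfl fun i _ => ?_
    rw [two_mul_sinh_sq, Nat.cast_one, one_mul, two_mul_cosh_growthRate_sub_two,
      ← two_mul_cosh_growthRate_sub_two]
    ring
  rw [hprod, ← sinh_mul_prod_two_mul_cosh_sub hl, cosh_growthRate, Real.cos_pi]
  ring_nf

theorem sq_gridTau_mul {l m : ℕ} (hl : l ≠ 0) (hm : m ≠ 0) :
    (gridTau l m : ℝ) ^ 2 * (l * Real.sinh (l * growthRate π)) =
      Real.sinh (growthRate π) * sinhProd l m ^ 2 := by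
  rw [← sinhProd_one_sq_mul_sinh hl, ← gridTau_mul_sinhProd_one hl hm]
  ring

end GrowthRate

section Duality

theorem coshProd_mul_prod_two_mul_sinh {l n : ℕ} (hl : l ≠ 0) (hn : n ≠ 0) :
    coshProd l n * ∏ j ∈ range n, 2 * Real.sinh (growthRate ((2 * j + 1) * π / (2 * n))) =
      ∏ j ∈ range n, 2 * Real.sinh (l * growthRate ((2 * j + 1) * π / (2 * n))) := by
  have hcosh : coshProd l n = ∏ j ∈ range n, ∏ i ∈ Ico 1 l,
      (2 * Real.cosh (growthRate ((2 * j + 1) * π / (2 * n))) - 2 + pathEigenvalue l i) := by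
    rw [coshProd, Finset.prod_comm]
    refine prod_congr rfl fun i _ => ?_
    rw [← prod_two_mul_cosh_sub_two_mul_cos hn]
    refine prod_congr rfl fun j _ => ?_
    rw [cosh_growthRate, cosh_growthRate, pathEigenvalue]
    ring
  rw [hcosh, ← prod_mul_distrib]
  refine prod_congr rfl fun j _ => ?_
  rw [← sinh_mul_prod_two_mul_cosh_sub hl]
  ring

theorem sq_prod_two_mul_sinh_growthRate {n : ℕ} (hn : n ≠ 0) :
    (∏ j ∈ range n, 2 * Real.sinh (growthRate ((2 * j + 1) * π / (2 * n)))) ^ 2 =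
      4 * Real.cosh (n * growthRate π) := by
  have hzero := prod_two_mul_cosh_sub_two_mul_cos hn 0
  have hpi := prod_two_mul_cosh_sub_two_mul_cos hn (growthRate π)
  rw [mul_zero, Real.cosh_zero] at hzero
  calc _ = (2 * 1) * (2 * Real.cosh (n * growthRate π)) := by
        rw [← hzero, ← hpi, ← prod_pow, ← prod_mul_distrib]
        refine prod_congr rfl fun j _ => ?_
        rw [two_mul_sinh_sq, cosh_growthRate, cosh_growthRate, Real.cos_pi]
        ring
    _ = 4 * Real.cosh (n * growthRate π) := by ring

theorem sq_coshProd_mul_cosh {l n : ℕ} (hl : l ≠ 0) (hn : n ≠ 0) :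
    coshProd l n ^ 2 * (4 * Real.cosh (n * growthRate π)) =
      ∏ j ∈ range n, (2 * Real.sinh (l * growthRate ((2 * j + 1) * π / (2 * n)))) ^ 2 := by
  rw [← sq_prod_two_mul_sinh_growthRate hn, ← mul_pow, coshProd_mul_prod_two_mul_sinh hl hn,
    prod_pow]

theorem two_mul_sinh_pow_le {φ : ℝ} (hφ : 0 ≤ φ) {l l' : ℕ} (h : l ≤ l') :
    (2 * Real.sinh (l * φ)) ^ l' ≤ (2 * Real.sinh (l' * φ)) ^ l := by
  have hnonneg : 0 ≤ 1 - Real.exp (-(2 * (l * φ))) :=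
    sub_nonneg.2 (Real.exp_le_one_iff.2 (neg_nonpos.2 (by positivity)))
  have hle_one : 1 - Real.exp (-(2 * (l * φ))) ≤ 1 := sub_le_self _ (Real.exp_pos _).le
  rw [two_mul_sinh_eq, two_mul_sinh_eq, mul_pow, mul_pow, ← Real.exp_nat_mul, ← Real.exp_nat_mul,
    mul_left_comm (l' : ℝ)]
  gcongr ?_ * ?_
  calc (1 - Real.exp (-(2 * (l * φ)))) ^ l'
      ≤ (1 - Real.exp (-(2 * (l * φ)))) ^ l := pow_le_pow_of_le_one hnonneg hle_one h
    _ ≤ (1 - Real.exp (-(2 * (l' * φ)))) ^ l := by gcongr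

theorem sq_coshProd_mul_cosh_pow_le {l l' n : ℕ} (hl : l ≠ 0) (h : l ≤ l') (hn : n ≠ 0) :
    (coshProd l n ^ 2 * (4 * Real.cosh (n * growthRate π))) ^ l' ≤
      (coshProd l' n ^ 2 * (4 * Real.cosh (n * growthRate π))) ^ l := by
  rw [sq_coshProd_mul_cosh hl hn, sq_coshProd_mul_cosh (by lia) hn, ← prod_pow, ← prod_pow]
  refine prod_le_prod (fun j _ => by positivity) fun j hj => ?_
  have hφ := (growthRate_odd_mul_pi_div_pos (mem_range.1 hj)).le
  rw [pow_right_comm, pow_right_comm _ 2 l]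
  have hsinh := Real.sinh_nonneg_iff.2 (mul_nonneg l.cast_nonneg hφ)
  exact pow_le_pow_left₀ (pow_nonneg (mul_nonneg two_pos.le hsinh) _) (two_mul_sinh_pow_le hφ h) 2

theorem tendsto_log_two_mul_cosh_div {θ : ℝ} (hθ : 0 ≤ θ) :
    Tendsto (fun n : ℕ => Real.log (2 * Real.cosh (n * θ)) / n) atTop (𝓝 θ) := by
  have hupper : Tendsto (fun n : ℕ => θ + Real.log 2 / n) atTop (𝓝 θ) := by
    simpa using (tendsto_const_div_atTop_nhds_zero_nat (Real.log 2)).const_add θ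
  refine tendsto_of_tendsto_of_tendsto_of_le_of_le' tendsto_const_nhds hupper ?_ ?_
  all_goals
    filter_upwards [eventually_gt_atTop 0] with n hn
    have hn' : (0 : ℝ) < n := Nat.cast_pos.2 hn
  · rw [le_div_iff₀ hn', Real.le_log_iff_exp_le (by positivity), Real.cosh_eq, mul_comm]
    linarith [Real.exp_pos (-(n * θ))]
  · rw [div_le_iff₀ hn', Real.log_le_iff_le_exp (by positivity), add_mul,
      div_mul_cancel₀ _ hn'.ne', Real.exp_add, Real.exp_log two_pos, Real.cosh_eq, mul_comm θ]
    have hexp : Real.exp (-(n * θ)) ≤ Real.exp (n * θ) :=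
      Real.exp_le_exp.2 (neg_le_self (by positivity))
    linarith

theorem tendsto_log_sq_coshProd_div (l : ℕ) :
    Tendsto (fun n : ℕ => Real.log (coshProd l n ^ 2 * (4 * Real.cosh (n * growthRate π))) / n)
      atTop (𝓝 (2 * growthSum l)) := by
  have hcosh := tendsto_finsetSum (Ico 1 l) fun i hi =>
    tendsto_log_two_mul_cosh_div (growthRate_pi_mul_div_pos hi).le
  have hpi := tendsto_log_two_mul_cosh_div growthRate_pi_pos.le
  have hlim := ((hcosh.const_mul 2).add hpi).add
    (tendsto_const_div_atTop_nhds_zero_nat (Real.log 2))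
  convert hlim using 2 with n
  · have hlog : Real.log (coshProd l n) =
        ∑ i ∈ Ico 1 l, Real.log (2 * Real.cosh (n * growthRate (π * i / l))) :=
      Real.log_prod fun i _ => by positivity
    have hne : coshProd l n ≠ 0 := prod_ne_zero_iff.2 fun i _ => by positivity
    rw [show (4 : ℝ) = 2 * 2 by norm_num, mul_assoc 2 2, Real.log_mul (by positivity)
      (by positivity), Real.log_mul (by positivity) (by positivity), Real.log_pow, hlog,
      ← sum_div]
    push_cast
    ring
  · rw [growthSum]
    ring

theorem mul_growthSum_le {l l' : ℕ} (hl : l ≠ 0) (h : l ≤ l') :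
    l' * growthSum l ≤ l * growthSum l' := by
  have hlim := le_of_tendsto_of_tendsto ((tendsto_log_sq_coshProd_div l).const_mul (l' : ℝ))
    ((tendsto_log_sq_coshProd_div l').const_mul (l : ℝ)) ?_
  · linarith
  filter_upwards [eventually_gt_atTop 0] with n hn
  have hpos : 0 < coshProd l n ^ 2 := pow_pos (prod_pos fun i _ => by positivity) 2
  rw [← mul_div_assoc, ← mul_div_assoc, ← Real.log_pow, ← Real.log_pow]
  gcongr
  exact sq_coshProd_mul_cosh_pow_le hl h hn.ne'

end Duality

section Estimates

theorem five_le_exp_growthRate_pi : 5 ≤ Real.exp (growthRate π) := by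
  have hcosh : Real.cosh (growthRate π) = 3 := by
    rw [cosh_growthRate, Real.cos_pi]
    norm_num
  have hlt : Real.exp (-growthRate π) < 1 :=
    Real.exp_lt_one_iff.2 (neg_lt_zero.2 growthRate_pi_pos)
  rw [Real.cosh_eq] at hcosh
  linarith

theorem half_le_arsinh {t : ℝ} (ht₀ : 0 ≤ t) (ht₁ : t ≤ 1) : t / 2 ≤ Real.arsinh t :=
  calc t / 2 ≤ t / (1 + t) := by gcongr; linarith
    _ = 1 - (1 + t)⁻¹ := by field_simp; ring
    _ ≤ Real.log (1 + t) := Real.one_sub_inv_le_log_of_pos (by positivity)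
    _ ≤ Real.arsinh t := by
      rw [Real.arsinh, add_comm]
      gcongr
      exact Real.one_le_sqrt.2 (le_add_of_nonneg_right (sq_nonneg t))

theorem le_growthRate_pi_mul_div {l i : ℕ} (hi : i ∈ Ico 1 l) :
    (i / l : ℝ) ≤ growthRate (π * i / l) := by
  have hil : (i : ℝ) ≤ l := Nat.cast_le.2 (mem_Ico.1 hi).2.le
  have hl : (0 : ℝ) < l := Nat.cast_pos.2 (by grind)
  set t : ℝ := i / l with ht
  have ht₀ : 0 ≤ t := by positivity
  have ht₁ : t ≤ 1 := div_le_one_of_le₀ hil hl.le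
  have hsin : t ≤ Real.sin (π * i / l / 2) := by
    have hx : π * i / l / 2 = π / 2 * t := by rw [ht]; ring
    rw [hx]
    have hle := Real.mul_le_sin (x := π / 2 * t) (by positivity)
      (mul_le_of_le_one_right (by positivity) ht₁)
    rwa [← mul_assoc, div_mul_div_cancel₀ Real.pi_ne_zero, div_self two_ne_zero, one_mul] at hle
  rw [growthRate]
  linarith [Real.arsinh_le_arsinh.2 hsin, half_le_arsinh ht₀ ht₁]

theorem prod_exp_mul_growthRate (l : ℕ) (x : ℝ) :
    ∏ i ∈ Ico 1 l, Real.exp (x * growthRate (π * i / l)) =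
      Real.exp (x * (growthSum l - growthRate π / 2)) := by
  rw [← Real.exp_sum, ← mul_sum, growthSum, add_sub_cancel_right]

theorem two_mul_sinh_growthRate_pos {l m i : ℕ} (hm : m ≠ 0) (hi : i ∈ Ico 1 l) :
    0 < 2 * Real.sinh (m * growthRate (π * i / l)) :=
  mul_pos two_pos <| Real.sinh_pos_iff.2 <|
    mul_pos (Nat.cast_pos.2 (Nat.pos_of_ne_zero hm)) (growthRate_pi_mul_div_pos hi)

theorem sinhProd_pos (l : ℕ) {m : ℕ} (hm : m ≠ 0) : 0 < sinhProd l m :=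
  prod_pos fun _ => two_mul_sinh_growthRate_pos hm

theorem gridTau_pos {l m : ℕ} (hl : l ≠ 0) (hm : m ≠ 0) : 0 < gridTau l m := by
  have hpos := sinhProd_pos l hm
  rw [← gridTau_mul_sinhProd_one hl hm] at hpos
  exact_mod_cast pos_of_mul_pos_left hpos (sinhProd_pos l one_ne_zero).le

theorem sinhProd_le (l : ℕ) {m : ℕ} (hm : m ≠ 0) :
    sinhProd l m ≤ Real.exp (m * (growthSum l - growthRate π / 2)) := by
  rw [← prod_exp_mul_growthRate, sinhProd]
  refine prod_le_prod (fun _ hi => (two_mul_sinh_growthRate_pos hm hi).le) fun i _ => ?_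
  rw [two_mul_sinh_eq]
  exact mul_le_of_le_one_right (Real.exp_pos _).le (sub_le_self _ (Real.exp_pos _).le)

theorem one_sub_sum_le_prod_one_sub {ι R : Type*} [CommRing R] [LinearOrder R]
    [IsStrictOrderedRing R] {s : Finset ι} {f : ι → R} (hf₀ : ∀ i ∈ s, 0 ≤ f i)
    (hf₁ : ∀ i ∈ s, f i ≤ 1) : 1 - ∑ i ∈ s, f i ≤ ∏ i ∈ s, (1 - f i) := by
  induction s using Finset.cons_induction with
  | empty => simp
  | cons a s ha ih =>
    simp only [mem_cons, forall_eq_or_imp] at hf₀ hf₁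
    rw [sum_cons, prod_cons]
    calc 1 - (f a + ∑ i ∈ s, f i) ≤ (1 - f a) * (1 - ∑ i ∈ s, f i) := by
          linarith [mul_nonneg hf₀.1 (sum_nonneg hf₀.2)]
      _ ≤ (1 - f a) * ∏ i ∈ s, (1 - f i) :=
        mul_le_mul_of_nonneg_left (ih hf₀.2 hf₁.2) (sub_nonneg.2 hf₁.1)

theorem exp_neg_mul_growthRate_le {l m i : ℕ} (h : l ≤ m) (hi : i ∈ Ico 1 l) :
    Real.exp (-(2 * (m * growthRate (π * i / l)))) ≤ (1 / 4) ^ i := by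
  have hl : (0 : ℝ) < l := Nat.cast_pos.2 (by grind)
  have hle : (i : ℝ) ≤ m * growthRate (π * i / l) :=
    calc (i : ℝ) = l * (i / l) := by field_simp
      _ ≤ m * growthRate (π * i / l) := by
        gcongr
        exact le_growthRate_pi_mul_div hi
  have htwo : 2 ≤ Real.exp 1 := by linarith [Real.add_one_le_exp 1]
  calc Real.exp (-(2 * (m * growthRate (π * i / l)))) ≤ Real.exp (i * -2) := by
        gcongr
        linarith
    _ = ((Real.exp 1 ^ 2)⁻¹) ^ i := by
      rw [Real.exp_nat_mul, Real.exp_neg, ← Real.exp_nat_mul]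
      norm_num
    _ ≤ (1 / 4) ^ i := by
      rw [one_div]
      gcongr
      nlinarith

theorem le_sinhProd {l m : ℕ} (h : l ≤ m) :
    2 / 3 * Real.exp (m * (growthSum l - growthRate π / 2)) ≤ sinhProd l m := by
  set f : ℕ → ℝ := fun i => Real.exp (-(2 * (m * growthRate (π * i / l))))
  have hf (i : ℕ) (hi : i ∈ Ico 1 l) : f i ≤ (1 / 4) ^ i := exp_neg_mul_growthRate_le h hi
  have hsum : ∑ i ∈ Ico 1 l, f i ≤ 1 / 3 :=
    calc ∑ i ∈ Ico 1 l, f i ≤ ∑ i ∈ Ico 1 l, (1 / 4 : ℝ) ^ i := sum_le_sum hf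
      _ ≤ (1 / 4) ^ 1 / (1 - 1 / 4) := geom_sum_Ico_le_of_lt_one (by norm_num) (by norm_num)
      _ = 1 / 3 := by norm_num
  have hprod : 2 / 3 ≤ ∏ i ∈ Ico 1 l, (1 - f i) := by
    have hle := one_sub_sum_le_prod_one_sub (s := Ico 1 l) (fun i _ => (Real.exp_pos _).le)
      fun i hi => (hf i hi).trans (pow_le_one₀ (by norm_num) (by norm_num))
    linarith
  rw [← prod_exp_mul_growthRate, mul_comm, sinhProd]
  simp_rw [two_mul_sinh_eq, prod_mul_distrib]
  exact mul_le_mul_of_nonneg_left hprod (prod_nonneg fun i _ => (Real.exp_pos _).le)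

theorem sinh_le_exp_div_two (x : ℝ) : Real.sinh x ≤ Real.exp x / 2 := by
  rw [Real.sinh_eq]
  linarith [Real.exp_pos (-x)]

theorem mul_exp_le_sinh {x : ℝ} (hx : 5 ≤ Real.exp x) :
    12 / 25 * Real.exp x ≤ Real.sinh x := by
  have hneg : Real.exp (-x) ≤ 5⁻¹ := by
    rw [Real.exp_neg]
    gcongr
  rw [Real.sinh_eq]
  linarith

theorem exp_sq_mul_exp (m : ℕ) (s γ : ℝ) :
    Real.exp (m * (s - γ / 2)) ^ 2 * Real.exp (m * γ) = Real.exp (2 * (m * s)) := by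
  rw [← Real.exp_nat_mul, ← Real.exp_add]
  push_cast
  ring_nf

theorem gridTau_sq_mul_le {l m : ℕ} (hl : l ≠ 0) (hm : m ≠ 0) :
    12 / 25 * (gridTau l m ^ 2 * l * Real.exp ((l + m) * growthRate π)) ≤
      Real.sinh (growthRate π) * Real.exp (2 * (m * growthSum l)) := by
  set γ := growthRate π
  have hγ : 0 < γ := growthRate_pi_pos
  have hsinh : 12 / 25 * Real.exp (l * γ) ≤ Real.sinh (l * γ) := by
    refine mul_exp_le_sinh (five_le_exp_growthRate_pi.trans (Real.exp_le_exp.2 ?_))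
    exact le_mul_of_one_le_left hγ.le (Nat.one_le_cast.2 (Nat.one_le_iff_ne_zero.2 hl))
  calc 12 / 25 * (gridTau l m ^ 2 * l * Real.exp ((l + m) * γ))
      = gridTau l m ^ 2 * (l * (12 / 25 * Real.exp (l * γ))) * Real.exp (m * γ) := by
        rw [add_mul, Real.exp_add]
        ring
    _ ≤ gridTau l m ^ 2 * (l * Real.sinh (l * γ)) * Real.exp (m * γ) := by gcongr
    _ = Real.sinh γ * (sinhProd l m ^ 2 * Real.exp (m * γ)) := by
        rw [sq_gridTau_mul hl hm, mul_assoc]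
    _ ≤ Real.sinh γ * (Real.exp (m * (growthSum l - γ / 2)) ^ 2 * Real.exp (m * γ)) := by
        gcongr
        · exact (sinhProd_pos l hm).le
        · exact sinhProd_le l hm
    _ = Real.sinh γ * Real.exp (2 * (m * growthSum l)) := by rw [exp_sq_mul_exp]

theorem le_gridTau_sq_mul {l m : ℕ} (hl : l ≠ 0) (h : l ≤ m) :
    8 / 9 * (Real.sinh (growthRate π) * Real.exp (2 * (m * growthSum l))) ≤
      gridTau l m ^ 2 * l * Real.exp ((l + m) * growthRate π) := by
  set γ := growthRate π
  have hγ : 0 < γ := growthRate_pi_pos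
  calc 8 / 9 * (Real.sinh γ * Real.exp (2 * (m * growthSum l)))
      = 2 * (Real.sinh γ * (2 / 3 * Real.exp (m * (growthSum l - γ / 2))) ^ 2) *
          Real.exp (m * γ) := by
        rw [← exp_sq_mul_exp]
        ring
    _ ≤ 2 * (Real.sinh γ * sinhProd l m ^ 2) * Real.exp (m * γ) := by
        gcongr
        exact le_sinhProd h
    _ = 2 * (gridTau l m ^ 2 * (l * Real.sinh (l * γ))) * Real.exp (m * γ) := by
        rw [sq_gridTau_mul hl (by lia)]
    _ ≤ 2 * (gridTau l m ^ 2 * (l * (Real.exp (l * γ) / 2))) * Real.exp (m * γ) := by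
        gcongr
        exact sinh_le_exp_div_two _
    _ = gridTau l m ^ 2 * l * Real.exp ((l + m) * γ) := by
        rw [add_mul, Real.exp_add]
        ring

theorem exists_perimeter_gap {l m l' m' : ℕ} (harea : l * m = l' * m') (h : l < l')
    (h' : l' ≤ m') : ∃ d : ℕ, d ≠ 0 ∧ l + m = l' + m' + d ∧ l' ≤ l * (1 + d) := by
  zify at harea h h' ⊢
  have hgap : (l * (l + m - l' - m') : ℤ) = (l' - l) * (m' - l) := by linear_combination harea
  have hle : (l' - l : ℤ) ≤ l * (l + m - l' - m') := by
    rw [hgap]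
    exact le_mul_of_one_le_right (by linarith) (by linarith)
  have hpos : (0 : ℤ) < l + m - l' - m' :=
    pos_of_mul_pos_right (by linarith) l.cast_nonneg
  lift (l + m - l' - m' : ℤ) to ℕ using hpos.le with d hd
  exact ⟨d, hpos.ne', by linarith, by linarith⟩

theorem mul_one_add_le_exp {d : ℕ} (hd : d ≠ 0) :
    5 / 2 * (1 + d) ≤ Real.exp (d * growthRate π) := by
  have hd₁ : (1 : ℝ) ≤ d := Nat.one_le_cast.2 (Nat.one_le_iff_ne_zero.2 hd)
  calc 5 / 2 * (1 + d) ≤ 1 + (d : ℝ) * 4 := by linarith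
    _ ≤ (1 + 4) ^ d := one_add_mul_le_pow (by norm_num) d
    _ ≤ Real.exp (growthRate π) ^ d := by
      gcongr
      linarith [five_le_exp_growthRate_pi]
    _ = Real.exp (d * growthRate π) := (Real.exp_nat_mul _ d).symm

theorem mul_growthSum_le_of_area_eq {l m l' m' : ℕ} (hl : l ≠ 0) (h : l ≤ l')
    (harea : l * m = l' * m') : m * growthSum l ≤ m' * growthSum l' := by
  have hl' : (0 : ℝ) < l' := Nat.cast_pos.2 (by lia)
  have harea' : (l * m : ℝ) = l' * m' := by exact_mod_cast harea
  refine le_of_mul_le_mul_left ?_ hl'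
  calc l' * (m * growthSum l) = m * (l' * growthSum l) := mul_left_comm ..
    _ ≤ m * (l * growthSum l') :=
      mul_le_mul_of_nonneg_left (mul_growthSum_le hl h) m.cast_nonneg
    _ = l' * (m' * growthSum l') := by linear_combination growthSum l' * harea'

theorem gridTau_sq_mul_le_of_area_eq {l m l' m' : ℕ} (hl : l ≠ 0) (hm : m ≠ 0)
    (harea : l * m = l' * m') (h : l ≤ l') (h' : l' ≤ m') :
    32 / 75 * (gridTau l m ^ 2 * l * Real.exp ((l + m) * growthRate π)) ≤
      gridTau l' m' ^ 2 * l' * Real.exp ((l' + m') * growthRate π) := by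
  have hsinh : 0 < Real.sinh (growthRate π) := Real.sinh_pos_iff.2 growthRate_pi_pos
  have hgrowth : Real.sinh (growthRate π) * Real.exp (2 * (m * growthSum l)) ≤
      Real.sinh (growthRate π) * Real.exp (2 * (m' * growthSum l')) := by
    gcongr _ * Real.exp (2 * ?_)
    exact mul_growthSum_le_of_area_eq hl h harea
  linarith [gridTau_sq_mul_le hl hm, le_gridTau_sq_mul (by lia) h']

theorem gridTau_sq_le {l m l' m' : ℕ} (hl : l ≠ 0) (harea : l * m = l' * m') (h : l < l')
    (h' : l' ≤ m') : (gridTau l m : ℝ) ^ 2 ≤ 15 / 16 * gridTau l' m' ^ 2 := by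
  obtain ⟨d, hd, hperim, hside⟩ := exists_perimeter_gap harea h h'
  have hm : m ≠ 0 :=
    right_ne_zero_of_mul (harea.trans_ne (mul_ne_zero (by lia) (by lia)))
  have hperim' : (l + m : ℝ) = l' + m' + d := by exact_mod_cast hperim
  have hside' : (l' : ℝ) ≤ l * (1 + d) := by exact_mod_cast hside
  have hexp : 1 + d ≤ 2 / 5 * Real.exp (d * growthRate π) := by
    linarith [mul_one_add_le_exp hd]
  have hpos : 0 < l * Real.exp ((l + m) * growthRate π) :=
    mul_pos (Nat.cast_pos.2 (Nat.pos_of_ne_zero hl)) (Real.exp_pos _)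
  refine le_of_mul_le_mul_right ?_ hpos
  calc gridTau l m ^ 2 * (l * Real.exp ((l + m) * growthRate π))
      ≤ 75 / 32 * (gridTau l' m' ^ 2 * l' * Real.exp ((l' + m') * growthRate π)) := by
        linarith [gridTau_sq_mul_le_of_area_eq hl hm harea h.le h']
    _ ≤ 75 / 32 * (gridTau l' m' ^ 2 * (l * (2 / 5 * Real.exp (d * growthRate π))) *
          Real.exp ((l' + m') * growthRate π)) := by
        gcongr
        exact hside'.trans (by gcongr)
    _ = 15 / 16 * gridTau l' m' ^ 2 * (l * Real.exp ((l + m) * growthRate π)) := by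
        rw [hperim', add_mul _ (d : ℝ), Real.exp_add]
        ring

end Estimates

theorem strict_balancing (l m l' m' : ℕ) (hl : 0 < l) (hm : 0 < m) (hl' : 0 < l') (hm' : 0 < m')
    (harea : l * m = l' * m') (h1 : l < l') (h2 : l' ≤ m') (h3 : m' ≤ m) :
    gridTau l m < gridTau l' m' := by
  have hpos : (0 : ℝ) < gridTau l' m' := Nat.cast_pos.2 (gridTau_pos hl'.ne' hm'.ne')
  have hsq : (gridTau l m : ℝ) ^ 2 < gridTau l' m' ^ 2 :=
    calc (gridTau l m : ℝ) ^ 2 ≤ 15 / 16 * gridTau l' m' ^ 2 := gridTau_sq_le hl.ne' harea h1 h2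
      _ < gridTau l' m' ^ 2 := by linarith [pow_pos hpos 2]
  exact_mod_cast lt_of_pow_lt_pow_left₀ 2 hpos.le hsq
end
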